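/- Let α, β ≥ −1/2 and let i, j ≥ 0 be real numbers. Define k_n^{(α,β),i,j}(cos θ, cos φ) := (sin(θ/2) sin(φ/2))^i (cos(θ/2) cos(φ/2))^j · k_n^{(α+i,β+j)}(cos θ, cos φ). Then there exists a constant c > 0, depending only on α, β, i, j, such that for all integers n ≥ 1 and all θ, φ ∈ [0,π]: |k_n^{(α,β),i,j}(cos θ, cos φ)| ≤ c · (sin(θ/2) sin(φ/2) + n^{−1}|θ−φ| + n^{−2})^{−α−1/2} · (cos(θ/2) cos(φ/2) + n^{−1}|θ−φ| + n^{−2})^{−β−1/2} / (|θ−φ| + n^{−1}). -/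

import Mathlib

open MeasureTheory Real Set Filter
open scoped ENNReal

noncomputable section

/-- The parabolic-type domain `Ω`, the image of the triangle `-1 < x < y < 1`
under `(x, y) ↦ (x + y, x y)`. -/
def omegaDom : Set (ℝ × ℝ) :=
  {q | ∃ x y : ℝ, -1 < x ∧ x < y ∧ y < 1 ∧ q = (x + y, x * y)}

/-- The square `[-1,1]²`. -/
def sqDom : Set (ℝ × ℝ) := Icc (-1 : ℝ) 1 ×ˢ Icc (-1 : ℝ) 1

/-- The open triangle `-1 < x < y < 1`. -/
def triDom : Set (ℝ × ℝ) := {q | -1 < q.1 ∧ q.1 < q.2 ∧ q.2 < 1}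

/-- The smaller root `x(u,v)` of `t² - u t + v = 0`. -/
def xRoot (q : ℝ × ℝ) : ℝ := (q.1 - Real.sqrt (q.1 ^ 2 - 4 * q.2)) / 2

/-- The larger root `y(u,v)` of `t² - u t + v = 0`. -/
def yRoot (q : ℝ × ℝ) : ℝ := (q.1 + Real.sqrt (q.1 ^ 2 - 4 * q.2)) / 2

/-- Evaluation of a two-variable polynomial at a point of `ℝ²`. -/
def evalP (P : MvPolynomial (Fin 2) ℝ) (q : ℝ × ℝ) : ℝ :=
  MvPolynomial.eval ![q.1, q.2] P

/-- The space `V_n(W)` of orthogonal polynomials of degree `n` for the weight `W`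
on the domain `D`: polynomials of exact total degree `n` orthogonal to all
polynomials of lower degree. -/
def Vpoly (D : Set (ℝ × ℝ)) (W : ℝ × ℝ → ℝ) (n : ℕ) : Set (MvPolynomial (Fin 2) ℝ) :=
  {P | P.totalDegree = n ∧ ∀ Q : MvPolynomial (Fin 2) ℝ, Q.totalDegree < n →
    (∫ q in D, evalP P q * evalP Q q * W q) = 0}

/-- `Q 0, …, Q n` is an orthonormal basis of `V_n(W)` on `D`. -/
def isONBVn (D : Set (ℝ × ℝ)) (W : ℝ × ℝ → ℝ) (n : ℕ)
    (Q : ℕ → MvPolynomial (Fin 2) ℝ) : Prop :=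
  (∀ k, k ≤ n → Q k ∈ Vpoly D W n) ∧
  (∀ k, k ≤ n → ∀ j, j ≤ n →
    (∫ q in D, evalP (Q k) q * evalP (Q j) q * W q) = if k = j then 1 else 0) ∧
  (∀ R ∈ Vpoly D W n, R ∈ Submodule.span ℝ (Q '' Set.Iic n))

/-- `K` is the reproducing kernel of `Π_n²` in `L²(W)` on the domain `D`:
it is a polynomial function, for each fixed `x ∈ D` it is a polynomial of total
degree `≤ n` in the second variable, and it reproduces every polynomial of total
degree `≤ n`. -/
def IsRK (D : Set (ℝ × ℝ)) (W : ℝ × ℝ → ℝ) (n : ℕ) (K : ℝ × ℝ → ℝ × ℝ → ℝ) : Prop :=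
  (∃ KP : MvPolynomial (Fin 4) ℝ,
    ∀ x y : ℝ × ℝ, K x y = MvPolynomial.eval ![x.1, x.2, y.1, y.2] KP) ∧
  (∀ x ∈ D, ∃ P : MvPolynomial (Fin 2) ℝ, P.totalDegree ≤ n ∧ ∀ y, K x y = evalP P y) ∧
  (∀ P : MvPolynomial (Fin 2) ℝ, P.totalDegree ≤ n →
    ∀ x ∈ D, (∫ y in D, K x y * evalP P y * W y) = evalP P x)

/-- `p` is the sequence of orthonormal polynomials with respect to the weight `w`
on `[-1,1]`: `p n` has degree exactly `n`, positive leading coefficient, and the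
`p n` are orthonormal in `L²(w)`. -/
def IsONPS (w : ℝ → ℝ) (p : ℕ → Polynomial ℝ) : Prop :=
  (∀ n, (p n).natDegree = n) ∧ (∀ n, 0 < (p n).leadingCoeff) ∧
  (∀ n m, (∫ x in Icc (-1:ℝ) 1, (p n).eval x * (p m).eval x * w x)
    = if n = m then 1 else 0)

/-- The Christoffel–Darboux kernel `k_n(x,y) = ∑_{j=0}^n p_j(x) p_j(y)`. -/
def CDK (p : ℕ → Polynomial ℝ) (n : ℕ) (x y : ℝ) : ℝ :=
  ∑ j ∈ Finset.range (n + 1), (p j).eval x * (p j).eval y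

/-- The Jacobi factor `J_{a,b}(x) = (1-x)^a (1+x)^b`. -/
def Jw (a b : ℝ) (x : ℝ) : ℝ := (1 - x) ^ a * (1 + x) ^ b

/-- The factor `J*_{a,b}(u,v) = (1-u+v)^a (1+u+v)^b` on `Ω`. -/
def JstarW (a b : ℝ) (q : ℝ × ℝ) : ℝ := (1 - q.1 + q.2) ^ a * (1 + q.1 + q.2) ^ b

/-- Modulus of continuity of `ψ` on `[-1,1]`. -/
def modCont (ψ : ℝ → ℝ) (t : ℝ) : ℝ :=
  sSup {d : ℝ | ∃ x ∈ Icc (-1:ℝ) 1, ∃ y ∈ Icc (-1:ℝ) 1, |x - y| ≤ t ∧ d = |ψ x - ψ y|}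

/-- The generalized Jacobi class `GJ`. -/
def IsGJ (w : ℝ → ℝ) : Prop :=
  ∃ (r : ℕ) (ψ : ℝ → ℝ) (γ₀ γ₁ : ℝ) (γs xs : Fin r → ℝ),
    -1 < γ₀ ∧ -1 < γ₁ ∧ (∀ i, -1 < γs i) ∧
    StrictMono xs ∧ (∀ i, xs i ∈ Ioo (-1:ℝ) 1) ∧
    ContinuousOn ψ (Icc (-1:ℝ) 1) ∧ (∀ x ∈ Icc (-1:ℝ) 1, 0 < ψ x) ∧
    IntegrableOn (fun t => modCont ψ t / t) (Ioc (0:ℝ) 1) ∧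
    (∀ x : ℝ, |x| ≤ 1 → w x = ψ x * (1 - x) ^ γ₀ * (1 + x) ^ γ₁ * ∏ i, |x - xs i| ^ γs i) ∧
    (∀ x : ℝ, 1 < |x| → w x = 0)

/-- The `L^p`-norm `‖f‖_{w,e}` on `[-1,1]` (as an extended nonnegative real). -/
def lpnormI (w : ℝ → ℝ) (e : ℝ) (f : ℝ → ℝ) : ℝ≥0∞ :=
  (∫⁻ x in Icc (-1:ℝ) 1, ENNReal.ofReal (|f x| ^ e * w x)) ^ (1 / e)

/-- The `L^p`-norm `‖f‖_{W,e}` on a planar domain `D` (as an extended nonnegative real). -/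
def lpnormD (D : Set (ℝ × ℝ)) (W : ℝ × ℝ → ℝ) (e : ℝ) (f : ℝ × ℝ → ℝ) : ℝ≥0∞ :=
  (∫⁻ q in D, ENNReal.ofReal (|f q| ^ e * W q)) ^ (1 / e)

/-- The operator `s_n^{i,j}(w; f, x)` built from the Christoffel–Darboux kernel of the
orthonormal polynomials `pij` of the weight `J_{i,j} w`. -/
def snOp (w : ℝ → ℝ) (pij : ℕ → Polynomial ℝ) (i j : ℝ) (n : ℕ) (f : ℝ → ℝ) (x : ℝ) : ℝ :=
  Jw (i/2) (j/2) x * ∫ y in Icc (-1:ℝ) 1, f y * CDK pij n x y * Jw (i/2) (j/2) y * w y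

/-- Substitution `(x, y) ↦ (2 x y, x² + y² - 1)` on two-variable polynomials. -/
def quadSub (P : MvPolynomial (Fin 2) ℝ) : MvPolynomial (Fin 2) ℝ :=
  MvPolynomial.aeval
    ![2 * MvPolynomial.X 0 * MvPolynomial.X 1,
      MvPolynomial.X 0 ^ 2 + MvPolynomial.X 1 ^ 2 - 1] P

/-- A one-variable polynomial viewed as a polynomial in the first variable. -/
def polyX (q : Polynomial ℝ) : MvPolynomial (Fin 2) ℝ :=
  Polynomial.aeval (MvPolynomial.X 0) q

/-- A one-variable polynomial viewed as a polynomial in the second variable. -/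
def polyY (q : Polynomial ℝ) : MvPolynomial (Fin 2) ℝ :=
  Polynomial.aeval (MvPolynomial.X 1) q


section JacAlg
open Polynomial

/-- The first-order operator `(1-X²) r' + (b-a-(a+b+2)X) r`. -/
def jacD (a b : ℝ) (r : ℝ[X]) : ℝ[X] :=
  (1 - X ^ 2) * derivative r + (C (b - a) - C (a + b + 2) * X) * r

/-- orthonormality data for an abstract linear functional -/
structure JacData (a b : ℝ) (ell : ℝ[X] →ₗ[ℝ] ℝ) (p : ℕ → ℝ[X]) : Prop where
  deg : ∀ n, (p n).natDegree = n
  lc : ∀ n, 0 < (p n).leadingCoeff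
  orth : ∀ n m, ell (p n * p m) = if n = m then 1 else 0
  ibp : ∀ r, ell (jacD a b r) = 0

variable {a b : ℝ} {ell : ℝ[X] →ₗ[ℝ] ℝ} {p : ℕ → ℝ[X]}

lemma JacData.co (h : JacData a b ell p) (n : ℕ) : 0 < (p n).coeff n := by
  have := h.lc n
  rwa [Polynomial.leadingCoeff, h.deg n] at this

lemma JacData.hi (h : JacData a b ell p) (n m : ℕ) (hm : n < m) : (p n).coeff m = 0 :=
  Polynomial.coeff_eq_zero_of_natDegree_lt (by rw [h.deg n]; exact hm)

lemma JacData.f1 (h : JacData a b ell p) : ∀ (d : ℕ) (q : ℝ[X]), (∀ m, d ≤ m → q.coeff m = 0) →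
    ∀ n, d ≤ n → ell (p n * q) = 0 := by
  intro d
  induction d with
  | zero =>
    intro q hq n _
    have : q = 0 := by ext m; simpa using hq m (Nat.zero_le _)
    simp [this]
  | succ d ih =>
    intro q hq n hn
    have hc := h.co d
    have h1 := ih (q - C (q.coeff d / (p d).coeff d) * p d) (by
      intro m hm
      rcases hm.eq_or_lt with rfl | hm
      · simp; field_simp; simp
      · simp [hq m hm, h.hi d m hm]) n (by omega)
    have h2 : p n * (q - C (q.coeff d / (p d).coeff d) * p d)
        = p n * q - (q.coeff d / (p d).coeff d) • (p n * p d) := by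
      rw [Polynomial.smul_eq_C_mul]; ring
    rw [h2, map_sub, map_smul, h.orth, if_neg (by omega)] at h1
    simpa using h1

lemma JacData.f2 (h : JacData a b ell p) (n : ℕ) (q : ℝ[X]) (hq : ∀ m, n < m → q.coeff m = 0) :
    ell (p n * q) = q.coeff n / (p n).coeff n := by
  have hc := h.co n
  have h1 := h.f1 n (q - C (q.coeff n / (p n).coeff n) * p n) (by
      intro m hm
      rcases hm.eq_or_lt with rfl | hm
      · simp; field_simp; simp
      · simp [hq m hm, h.hi n m hm]) n le_rfl
  have h2 : p n * (q - C (q.coeff n / (p n).coeff n) * p n)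
        = p n * q - (q.coeff n / (p n).coeff n) • (p n * p n) := by
      rw [Polynomial.smul_eq_C_mul]; ring
  rw [h2, map_sub, map_smul, h.orth, if_pos rfl] at h1
  simp at h1; linarith

lemma JacData.f3 (h : JacData a b ell p) (n : ℕ) (q : ℝ[X]) (hq : ∀ m, n < m → q.coeff m = 0)
    (ho : ∀ m, m < n → ell (q * p m) = 0) :
    q = C (q.coeff n / (p n).coeff n) * p n := by
  set r := q - C (q.coeff n / (p n).coeff n) * p n with hr
  have hc := h.co n
  have hr0 : ∀ m, n ≤ m → r.coeff m = 0 := by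
    intro m hm
    rcases hm.eq_or_lt with rfl | hm
    · simp [hr]; field_simp; simp
    · simp [hr, hq m hm, h.hi n m hm]
  have key : r = 0 := by
    by_contra hne
    have hd : r.natDegree < n := by
      by_contra hcon
      exact hne (Polynomial.leadingCoeff_eq_zero.mp (hr0 _ (not_lt.mp hcon)))
    have e1 := h.f2 r.natDegree r (fun m hm => Polynomial.coeff_eq_zero_of_natDegree_lt hm)
    have e2 : ell (p r.natDegree * r) = 0 := by
      have : p r.natDegree * r = q * p r.natDegree
          - (q.coeff n / (p n).coeff n) • (p n * p r.natDegree) := by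
        rw [Polynomial.smul_eq_C_mul, mul_comm, hr, sub_mul]; ring
      rw [this, map_sub, map_smul, h.orth, if_neg (by omega), ho _ hd]; simp
    rw [e2] at e1
    have h3 := h.co r.natDegree
    have h4 : r.coeff r.natDegree = 0 := by
      field_simp at e1; linarith
    exact hne (Polynomial.leadingCoeff_eq_zero.mp h4)
  have := sub_eq_zero.mp key
  exact this

lemma coeff_Xd (r : ℝ[X]) (m : ℕ) : (X * derivative r).coeff m = m * r.coeff m := by
  cases m with
  | zero => simp
  | succ m => rw [coeff_X_mul, coeff_derivative]; push_cast; ring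

lemma coeff_X2d (r : ℝ[X]) (m : ℕ) : (X ^ 2 * derivative r).coeff (m + 1) = m * r.coeff m := by
  have : X ^ 2 * derivative r = X * (X * derivative r) := by ring
  rw [this, coeff_X_mul, coeff_Xd]

lemma coeff_jacD (r : ℝ[X]) (m : ℕ) : (jacD a b r).coeff (m + 1)
    = (m + 2) * r.coeff (m + 2) + (b - a) * r.coeff (m + 1) - (m + a + b + 2) * r.coeff m := by
  have : jacD a b r = derivative r - X ^ 2 * derivative r + C (b - a) * r
      - C (a + b + 2) * (X * r) := by unfold jacD; ring
  rw [this]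
  simp only [coeff_sub, coeff_add, coeff_C_mul, coeff_X_mul, coeff_X2d, coeff_derivative]
  push_cast; ring

lemma coeff_jacL (r : ℝ[X]) (m : ℕ) : (jacD a b (derivative r)).coeff m
    = (m + 2) * (m + 1) * r.coeff (m + 2) + (b - a) * (m + 1) * r.coeff (m + 1)
      - m * (m + a + b + 1) * r.coeff m := by
  cases m with
  | succ m =>
    rw [coeff_jacD]; simp only [coeff_derivative]; push_cast; ring
  | zero =>
    have : jacD a b (derivative r) = derivative (derivative r) - X * (X * derivative (derivative r))
      + C (b - a) * derivative r - C (a + b + 2) * (X * derivative r) := by unfold jacD; ring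
    rw [this]
    simp [coeff_derivative]; ring

lemma jac_sym (h : JacData a b ell p) (f g : ℝ[X]) :
    ell (jacD a b (derivative f) * g) = - ell ((1 - X ^ 2) * derivative f * derivative g) := by
  have := h.ibp (derivative f * g)
  have e : jacD a b (derivative f * g)
      = jacD a b (derivative f) * g + (1 - X ^ 2) * derivative f * derivative g := by
    unfold jacD; rw [derivative_mul]; ring
  rw [e, map_add] at this
  linarith

lemma JacData.ode (h : JacData a b ell p) (n : ℕ) :
    jacD a b (derivative (p n)) = - C (n * (n + a + b + 1)) * p n := by
  have h1 := h.f3 n (jacD a b (derivative (p n))) (by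
    intro m hm
    rw [coeff_jacL, h.hi n m hm, h.hi n _ (by omega), h.hi n _ (by omega)]; ring) (by
    intro m hm
    rw [jac_sym h]
    have e1 := jac_sym h (p m) (p n)
    have e2 : (1 - X ^ 2) * derivative (p n) * derivative (p m)
      = (1 - X ^ 2) * derivative (p m) * derivative (p n) := by ring
    rw [e2, ← e1, mul_comm]
    apply h.f1 n _ _ n le_rfl
    intro k hk
    rw [coeff_jacL, h.hi m k (by omega), h.hi m _ (by omega), h.hi m _ (by omega)]; ring)
  rw [h1]
  have hc := h.co n
  rw [coeff_jacL, h.hi n _ (by omega), h.hi n _ (by omega), ← C_neg]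
  congr 2
  field_simp; ring

lemma JacData.energy (h : JacData a b ell p) (n : ℕ) :
    ell ((1 - X ^ 2) * derivative (p n) * derivative (p n)) = n * (n + a + b + 1) := by
  have e1 := jac_sym h (p n) (p n)
  rw [h.ode n, ← C_neg, mul_assoc, ← Polynomial.smul_eq_C_mul, map_smul, h.orth] at e1
  simp at e1
  linarith

/-- structure relation -/
lemma JacData.struct (h : JacData a b ell p) (n : ℕ) : ∃ A : ℝ,
    (1 - X ^ 2) * derivative (p (n+1)) + C ((n:ℝ) + 1) * X * p (n+1)
      - C ((2 * n + a + b + 3) * ((p n).coeff n / (p (n+1)).coeff (n+1))) * p n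
    = C A * p (n+1) := by
  refine ⟨_, h.f3 (n+1) _ ?_ ?_⟩
  · intro m hm
    obtain ⟨m, rfl⟩ : ∃ k, m = k + 1 := ⟨m - 1, by omega⟩
    have : (1 - X ^ 2) * derivative (p (n+1)) + C ((n:ℝ) + 1) * X * p (n+1)
      - C ((2 * n + a + b + 3) * ((p n).coeff n / (p (n+1)).coeff (n+1))) * p n
      = derivative (p (n+1)) - X^2 * derivative (p (n+1)) + C ((n:ℝ) + 1) * (X * p (n+1))
      - C ((2 * n + a + b + 3) * ((p n).coeff n / (p (n+1)).coeff (n+1))) * p n := by ring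
    rw [this]
    simp only [coeff_sub, coeff_add, coeff_C_mul, coeff_X_mul, coeff_X2d, coeff_derivative]
    rw [h.hi n (m+1) (by omega), h.hi (n+1) (m+1+1) (by omega)]
    rcases (show n + 1 ≤ m by omega).eq_or_lt with rfl | hm2
    · push_cast; ring
    · rw [h.hi (n+1) _ hm2]; ring
  · intro m hm
    have hc := h.co (n+1)
    have i1 := h.ibp (p (n+1) * p m)
    have e : jacD a b (p (n+1) * p m)
      = p (n+1) * jacD a b (p m) + (1 - X ^ 2) * derivative (p (n+1)) * p m := by
      unfold jacD; rw [derivative_mul]; ring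
    have i2 := h.f2 (n+1) (jacD a b (p m)) (by
      intro k hk
      obtain ⟨k, rfl⟩ : ∃ l, k = l + 1 := ⟨k - 1, by omega⟩
      rw [coeff_jacD, h.hi m _ (by omega), h.hi m _ (by omega), h.hi m _ (by omega)]; ring)
    have i3 := h.f2 (n+1) (X * p m) (by
      intro k hk
      obtain ⟨k, rfl⟩ : ∃ l, k = l + 1 := ⟨k - 1, by omega⟩
      rw [coeff_X_mul, h.hi m _ (by omega)])
    rw [coeff_jacD, h.hi m _ (by omega), h.hi m _ (by omega)] at i2
    rw [coeff_X_mul] at i3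
    rw [e, map_add, i2] at i1
    have e2 : ((1 - X ^ 2) * derivative (p (n+1)) + C ((n:ℝ) + 1) * X * p (n+1)
      - C ((2 * n + a + b + 3) * ((p n).coeff n / (p (n+1)).coeff (n+1))) * p n) * p m
      = (1 - X ^ 2) * derivative (p (n+1)) * p m + ((n:ℝ) + 1) • (p (n+1) * (X * p m))
        - ((2 * n + a + b + 3) * ((p n).coeff n / (p (n+1)).coeff (n+1))) • (p n * p m) := by
      simp only [Polynomial.smul_eq_C_mul]; ring
    rw [e2, map_sub, map_add, map_smul, map_smul, i3, h.orth]
    rcases (show m ≤ n by omega).eq_or_lt with rfl | hm2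
    · simp only [if_true, smul_eq_mul]
      have : ell ((1 - X ^ 2) * derivative (p (m + 1)) * p m)
        = (m + a + b + 2) * ((p m).coeff m / (p (m+1)).coeff (m+1)) := by
        linear_combination i1
      rw [this]; ring
    · rw [if_neg (by omega), h.hi m n hm2] at *
      simp at i1 ⊢
      exact i1

lemma JacData.rec0 (h : JacData a b ell p) : ∃ B : ℝ,
    X * p 0 - C ((p 0).coeff 0 / (p 1).coeff 1) * p 1 = C B * p 0 := by
  refine ⟨_, h.f3 0 _ ?_ (by intro m hm; omega)⟩
  intro m hm
  have hc := h.co 1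
  obtain ⟨m, rfl⟩ : ∃ k, m = k + 1 := ⟨m - 1, by omega⟩
  simp only [coeff_sub, coeff_C_mul, coeff_X_mul]
  rcases Nat.eq_zero_or_pos m with rfl | hm
  · simp; field_simp; simp
  · rw [h.hi 0 m hm, h.hi 1 (m+1) (by omega)]; ring

lemma JacData.recS (h : JacData a b ell p) (n : ℕ) : ∃ B : ℝ,
    X * p (n+1) - C ((p (n+1)).coeff (n+1) / (p (n+2)).coeff (n+2)) * p (n+2)
      - C ((p n).coeff n / (p (n+1)).coeff (n+1)) * p n = C B * p (n+1) := by
  refine ⟨_, h.f3 (n+1) _ ?_ ?_⟩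
  · intro m hm
    have hc := h.co (n+2)
    obtain ⟨m, rfl⟩ : ∃ k, m = k + 1 := ⟨m - 1, by omega⟩
    simp only [coeff_sub, coeff_C_mul, coeff_X_mul]
    rw [h.hi n (m+1) (by omega)]
    rcases (show n + 1 ≤ m by omega).eq_or_lt with rfl | hm
    · field_simp; ring
    · rw [h.hi (n+1) _ hm, h.hi (n+2) (m+1) (by omega)]; ring
  · intro m hm
    have i3 := h.f2 (n+1) (X * p m) (by
      intro k hk
      obtain ⟨k, rfl⟩ : ∃ l, k = l + 1 := ⟨k - 1, by omega⟩
      rw [coeff_X_mul, h.hi m _ (by omega)])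
    rw [coeff_X_mul] at i3
    have e2 : (X * p (n+1) - C ((p (n+1)).coeff (n+1) / (p (n+2)).coeff (n+2)) * p (n+2)
      - C ((p n).coeff n / (p (n+1)).coeff (n+1)) * p n) * p m
      = p (n+1) * (X * p m) - ((p (n+1)).coeff (n+1) / (p (n+2)).coeff (n+2)) • (p (n+2) * p m)
      - ((p n).coeff n / (p (n+1)).coeff (n+1)) • (p n * p m) := by
      simp only [Polynomial.smul_eq_C_mul]; ring
    rw [e2, map_sub, map_sub, map_smul, map_smul, i3, h.orth, h.orth, if_neg (by omega)]
    rcases (show m ≤ n by omega).eq_or_lt with rfl | hm2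
    · simp
    · rw [if_neg (by omega), h.hi m n hm2]; simp

lemma JacData.cd (h : JacData a b ell p) (x y : ℝ) (n : ℕ) :
    (x - y) * ∑ k ∈ Finset.range (n + 1), (p k).eval x * (p k).eval y
    = (p n).coeff n / (p (n+1)).coeff (n+1) *
      ((p (n+1)).eval x * (p n).eval y - (p n).eval x * (p (n+1)).eval y) := by
  induction n with
  | zero =>
    obtain ⟨B, hB⟩ := h.rec0
    have h1 := congrArg (eval x) hB
    have h2 := congrArg (eval y) hB
    simp at h1 h2
    simp
    linear_combination (p 0).eval y * h1 - (p 0).eval x * h2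
  | succ n ih =>
    obtain ⟨B, hB⟩ := h.recS n
    have h1 := congrArg (eval x) hB
    have h2 := congrArg (eval y) hB
    simp only [eval_sub, eval_mul, eval_X, eval_C] at h1 h2
    rw [Finset.sum_range_succ, mul_add, ih]
    linear_combination (p (n+1)).eval y * h1 - (p (n+1)).eval x * h2

lemma JacData.kernel (h : JacData a b ell p) (x y : ℝ) (n : ℕ) :
    (2 * n + a + b + 3) * ((x - y) * ∑ k ∈ Finset.range (n + 1), (p k).eval x * (p k).eval y)
    = (1 - y ^ 2) * (derivative (p (n+1))).eval y * (p (n+1)).eval x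
      - (1 - x ^ 2) * (derivative (p (n+1))).eval x * (p (n+1)).eval y
      + (n + 1) * (y - x) * ((p (n+1)).eval x * (p (n+1)).eval y) := by
  rw [h.cd]
  obtain ⟨A, hA⟩ := h.struct n
  have h1 := congrArg (eval x) hA
  have h2 := congrArg (eval y) hA
  simp only [eval_sub, eval_add, eval_mul, eval_X, eval_C, eval_one, eval_pow] at h1 h2
  linear_combination (p (n+1)).eval y * h1 - (p (n+1)).eval x * h2

end JacAlg

section JacInt
open Polynomial

/-- the Jacobi weight with constant -/
def jacW (c a b : ℝ) (x : ℝ) : ℝ := c * (1 - x) ^ a * (1 + x) ^ b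

lemma jacW_poly_int {c a b : ℝ} (hw : IntegrableOn (jacW c a b) (Icc (-1:ℝ) 1)) (q : ℝ[X]) :
    IntegrableOn (fun x => q.eval x * jacW c a b x) (Icc (-1:ℝ) 1) :=
  hw.continuousOn_mul (q.continuous.continuousOn) isCompact_Icc

/-- integration against the Jacobi weight -/
def jacEll {c a b : ℝ} (hw : IntegrableOn (jacW c a b) (Icc (-1:ℝ) 1)) : ℝ[X] →ₗ[ℝ] ℝ where
  toFun q := ∫ x in Icc (-1:ℝ) 1, q.eval x * jacW c a b x
  map_add' q r := by
    rw [← integral_add (jacW_poly_int hw q) (jacW_poly_int hw r)]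
    simp [add_mul]
  map_smul' t q := by
    simp [mul_assoc, integral_const_mul]

lemma jac_ibp {c a b : ℝ} (ha : -1 < a) (hb : -1 < b)
    (hw : IntegrableOn (jacW c a b) (Icc (-1:ℝ) 1)) (r : ℝ[X]) :
    jacEll hw (jacD a b r) = 0 := by
  change ∫ x in Icc (-1:ℝ) 1, (jacD a b r).eval x * jacW c a b x = 0
  rw [integral_Icc_eq_integral_Ioc, ← intervalIntegral.integral_of_le (by norm_num)]
  rw [intervalIntegral.integral_eq_sub_of_hasDerivAt_of_le (by norm_num)
    (f := fun x => c * (1 - x) ^ (a + 1) * (1 + x) ^ (b + 1) * r.eval x)]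
  · rw [sub_self, add_neg_cancel, Real.zero_rpow (by linarith), Real.zero_rpow (by linarith)]; simp
  · apply ContinuousOn.mul _ r.continuous.continuousOn
    apply ContinuousOn.mul
    · apply ContinuousOn.mul continuousOn_const
      exact (continuousOn_const.sub continuousOn_id).rpow_const (fun x _ => Or.inr (by linarith))
    · exact (continuousOn_const.add continuousOn_id).rpow_const (fun x _ => Or.inr (by linarith))
  · intro x hx
    have h1 : 0 < 1 - x := by linarith [hx.2]
    have h2 : 0 < 1 + x := by linarith [hx.1]
    have d1 : HasDerivAt (fun x : ℝ => (1 - x) ^ (a + 1)) (-1 * (a + 1) * (1 - x) ^ (a + 1 - 1)) x :=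
      ((hasDerivAt_id x).const_sub 1).rpow_const (Or.inl h1.ne')
    have d2 : HasDerivAt (fun x : ℝ => (1 + x) ^ (b + 1)) (1 * (b + 1) * (1 + x) ^ (b + 1 - 1)) x :=
      ((hasDerivAt_id x).const_add 1).rpow_const (Or.inl h2.ne')
    have d3 := ((d1.const_mul c).mul d2).mul (r.hasDerivAt x)
    refine d3.congr_deriv ?_
    simp only [Pi.mul_apply]
    unfold jacD jacW
    rw [Real.rpow_add_one h1.ne', Real.rpow_add_one h2.ne']
    simp
    ring
  · rw [intervalIntegrable_iff_integrableOn_Ioc_of_le (by norm_num)]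
    exact (jacW_poly_int hw _).mono_set Ioc_subset_Icc_self

lemma jac_data {c a b : ℝ} (ha : -1 < a) (hb : -1 < b)
    (hw : IntegrableOn (jacW c a b) (Icc (-1:ℝ) 1)) {p : ℕ → ℝ[X]}
    (hp : IsONPS (jacW c a b) p) : JacData a b (jacEll hw) p where
  deg := hp.1
  lc := hp.2.1
  orth n m := by
    rw [← hp.2.2 n m]
    change ∫ x in Icc (-1:ℝ) 1, (p n * p m).eval x * jacW c a b x = _
    simp
  ibp := jac_ibp ha hb hw

/-- averaging: a lower bound for the energy density on a small interval is `O(λ)` -/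
lemma jac_avg {c a b : ℝ} (hc : 0 < c) (ha : -1 < a) (hb : -1 < b)
    (hw : IntegrableOn (jacW c a b) (Icc (-1:ℝ) 1)) {p : ℕ → ℝ[X]}
    (hp : IsONPS (jacW c a b) p) (l r : ℝ) (hl : -1 < l) (hlr : l < r) (hr : r < 1) :
    ∃ C0 : ℝ, 0 < C0 ∧ ∀ (n : ℕ) (t : ℝ), 0 ≤ (n:ℝ) * (n + a + b + 1) →
      (∀ x ∈ Icc l r, t ≤ (1 - x ^ 2) * ((derivative (p n)).eval x) ^ 2
        + (n * (n + a + b + 1)) * ((p n).eval x) ^ 2) → t ≤ C0 * (n * (n + a + b + 1)) := by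
  have h := jac_data ha hb hw hp
  have hcont : ContinuousOn (jacW c a b) (Icc l r) := by
    unfold jacW
    apply ContinuousOn.mul
    · apply ContinuousOn.mul continuousOn_const
      exact (continuousOn_const.sub continuousOn_id).rpow_const
        (fun x hx => Or.inl (ne_of_gt (show (0:ℝ) < 1 - x by linarith [hx.2])))
    · exact (continuousOn_const.add continuousOn_id).rpow_const
        (fun x hx => Or.inl (ne_of_gt (show (0:ℝ) < 1 + x by linarith [hx.1])))
  obtain ⟨x0, hx0, hmin⟩ := isCompact_Icc.exists_isMinOn (nonempty_Icc.mpr hlr.le) hcont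
  have hpos : ∀ x ∈ Icc (-1:ℝ) 1, 0 ≤ jacW c a b x := by
    intro x hx
    have : 0 ≤ 1 - x := by linarith [hx.2]
    have : 0 ≤ 1 + x := by linarith [hx.1]
    unfold jacW; positivity
  have hm : 0 < jacW c a b x0 := by
    have : 0 < 1 - x0 := by linarith [hx0.2]
    have : 0 < 1 + x0 := by linarith [hx0.1]
    unfold jacW; positivity
  set m := jacW c a b x0
  refine ⟨2 / (m * (r - l)), by have := sub_pos.mpr hlr; positivity, ?_⟩
  intro n t hlam ht
  set lam : ℝ := n * (n + a + b + 1) with hlamdef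
  set Q : ℝ[X] := (1 - X ^ 2) * derivative (p n) * derivative (p n) + lam • (p n * p n) with hQ
  have hQe : jacEll hw Q = 2 * lam := by
    rw [hQ, map_add, map_smul, h.energy, h.orth]; simp; ring
  have hQev : ∀ x, Q.eval x = (1 - x ^ 2) * ((derivative (p n)).eval x) ^ 2
        + lam * ((p n).eval x) ^ 2 := by
    intro x; simp [hQ]; ring
  have hQnn : ∀ x ∈ Icc (-1:ℝ) 1, 0 ≤ Q.eval x := by
    intro x hx
    rw [hQev]
    have : 0 ≤ 1 - x ^ 2 := by nlinarith [hx.1, hx.2]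
    positivity
  by_cases ht0 : t ≤ 0
  · have := sub_pos.mpr hlr
    exact ht0.trans (by positivity)
  push Not at ht0
  have i1 : ∫ x in Icc l r, (m * t) ≤ ∫ x in Icc l r, Q.eval x * jacW c a b x := by
    apply setIntegral_mono_on continuous_const.integrableOn_Icc
      ((jacW_poly_int hw Q).mono_set (Icc_subset_Icc hl.le hr.le)) measurableSet_Icc
    intro x hx
    have hxm : m ≤ jacW c a b x := hmin hx
    have := ht x hx
    rw [← hQev] at this
    rw [mul_comm]
    exact mul_le_mul this hxm hm.le (ht0.le.trans this)
  have i2 : ∫ x in Icc l r, Q.eval x * jacW c a b x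
      ≤ ∫ x in Icc (-1:ℝ) 1, Q.eval x * jacW c a b x := by
    apply setIntegral_mono_set (jacW_poly_int hw Q)
    · filter_upwards [ae_restrict_mem measurableSet_Icc] with x hx
      exact mul_nonneg (hQnn x hx) (hpos x hx)
    · exact (Icc_subset_Icc hl.le hr.le).eventuallyLE
  have i3 : ∫ x in Icc (-1:ℝ) 1, Q.eval x * jacW c a b x = 2 * lam := hQe
  rw [i3] at i2
  have i4 : ∫ x in Icc l r, (m * t) = (r - l) * (m * t) := by
    simp [max_eq_left (sub_pos.mpr hlr).le]
  rw [i4] at i1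
  have := sub_pos.mpr hlr
  rw [div_mul_eq_mul_div, le_div_iff₀ (by positivity)]
  nlinarith

end JacInt

section JacOde

/-- the first-order coefficient in the trigonometric Jacobi equation -/
def jrho (A B θ : ℝ) : ℝ :=
  A / 2 * (Real.cos (θ/2) / Real.sin (θ/2)) - B / 2 * (Real.sin (θ/2) / Real.cos (θ/2))

/-- solutions `y`, with derivative `z`, of the trigonometric Jacobi equation -/
structure JSol (A B lam : ℝ) (y z : ℝ → ℝ) : Prop where
  hy : ∀ θ, HasDerivAt y (z θ) θ
  hz : ∀ θ ∈ Ioo (0:ℝ) π, HasDerivAt z (- jrho A B θ * z θ - lam * y θ) θ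
  z0 : z 0 = 0
  zc : Continuous z

variable {A B lam : ℝ} {y z : ℝ → ℝ}

lemma sinh_pos' {θ : ℝ} (h : θ ∈ Ioo (0:ℝ) π) : 0 < Real.sin (θ/2) :=
  Real.sin_pos_of_pos_of_lt_pi (by linarith [h.1]) (by linarith [h.1, h.2])

lemma cosh_pos' {θ : ℝ} (h0 : 0 ≤ θ) (h1 : θ < π) : 0 < Real.cos (θ/2) :=
  Real.cos_pos_of_mem_Ioo ⟨by linarith, by linarith⟩

lemma hd_sin2 (θ : ℝ) : HasDerivAt (fun t => Real.sin (t/2)) (Real.cos (θ/2) / 2) θ := by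
  have := (Real.hasDerivAt_sin (θ/2)).comp θ ((hasDerivAt_id θ).div_const 2)
  refine this.congr_deriv (by ring)

lemma hd_cos2 (θ : ℝ) : HasDerivAt (fun t => Real.cos (t/2)) (-Real.sin (θ/2) / 2) θ := by
  have := (Real.hasDerivAt_cos (θ/2)).comp θ ((hasDerivAt_id θ).div_const 2)
  refine this.congr_deriv (by ring)

lemma hd_sinp (e : ℝ) {θ : ℝ} (h : θ ∈ Ioo (0:ℝ) π) :
    HasDerivAt (fun t => Real.sin (t/2) ^ e)
      (Real.sin (θ/2) ^ e * (e / 2 * (Real.cos (θ/2) / Real.sin (θ/2)))) θ := by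
  have hs := sinh_pos' h
  refine ((hd_sin2 θ).rpow_const (p := e) (Or.inl hs.ne')).congr_deriv ?_
  rw [Real.rpow_sub_one hs.ne']; ring

lemma hd_cosp (e : ℝ) {θ : ℝ} (h0 : 0 ≤ θ) (h1 : θ < π) :
    HasDerivAt (fun t => Real.cos (t/2) ^ e)
      (Real.cos (θ/2) ^ e * (- e / 2 * (Real.sin (θ/2) / Real.cos (θ/2)))) θ := by
  have hs := cosh_pos' h0 h1
  refine ((hd_cos2 θ).rpow_const (p := e) (Or.inl hs.ne')).congr_deriv ?_
  rw [Real.rpow_sub_one hs.ne']; ring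

lemma hd_rho {θ : ℝ} (h : θ ∈ Ioo (0:ℝ) π) :
    HasDerivAt (jrho A B)
      (-(A / 4 * (1 / Real.sin (θ/2) ^ 2) + B / 4 * (1 / Real.cos (θ/2) ^ 2))) θ := by
  have hs := sinh_pos' h
  have hc := cosh_pos' h.1.le h.2
  have d1 := ((hd_cos2 θ).div (hd_sin2 θ) hs.ne').const_mul (A/2)
  have d2 := ((hd_sin2 θ).div (hd_cos2 θ) hc.ne').const_mul (B/2)
  refine (d1.sub d2).congr_deriv ?_
  have e := Real.sin_sq_add_cos_sq (θ/2)
  have e1 : -Real.sin (θ/2) / 2 * Real.sin (θ/2) - Real.cos (θ/2) * (Real.cos (θ/2) / 2) = -(1/2) := by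
    linear_combination -(1/2) * e
  have e2 : Real.cos (θ/2) / 2 * Real.cos (θ/2) - Real.sin (θ/2) * (-Real.sin (θ/2) / 2) = 1/2 := by
    linear_combination (1/2) * e
  rw [e1, e2]; ring

lemma JSol.hF (h : JSol A B lam y z) {θ : ℝ} (hθ : θ ∈ Ioo (0:ℝ) π) :
    HasDerivAt (fun t => z t ^ 2 + lam * y t ^ 2) (-2 * jrho A B θ * z θ ^ 2) θ := by
  refine (((h.hz θ hθ).pow 2).add (((h.hy θ).pow 2).const_mul lam)).congr_deriv ?_
  push_cast; simp; ring

lemma JSol.yc (h : JSol A B lam y z) : Continuous y :=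
  continuous_iff_continuousAt.mpr (fun t => (h.hy t).continuousAt)

lemma JSol.monoS (h : JSol A B lam y z) (hA : 0 ≤ A) (hB : 0 ≤ B) (hl : 0 ≤ lam) {t1 t2 : ℝ}
    (h1 : 0 < t1) (h12 : t1 ≤ t2) (h2 : t2 < π) :
    (z t1 ^ 2 + lam * y t1 ^ 2) * Real.sin (t1/2) ^ (2 * A)
      ≤ (z t2 ^ 2 + lam * y t2 ^ 2) * Real.sin (t2/2) ^ (2 * A) := by
  have hd : ∀ t ∈ Icc t1 t2, HasDerivAt
      (fun t => (z t ^ 2 + lam * y t ^ 2) * Real.sin (t/2) ^ (2 * A)) _ t := fun t ht =>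
    (h.hF (θ := t) ⟨by linarith [ht.1], by linarith [ht.2]⟩).mul
      (hd_sinp (2*A) ⟨by linarith [ht.1], by linarith [ht.2]⟩)
  have hm : MonotoneOn (fun t => (z t ^ 2 + lam * y t ^ 2) * Real.sin (t/2) ^ (2 * A)) (Icc t1 t2) := by
    apply monotoneOn_of_deriv_nonneg (convex_Icc _ _)
    · exact fun t ht => (hd t ht).continuousAt.continuousWithinAt
    · exact fun t ht => (hd t (interior_subset ht)).differentiableAt.differentiableWithinAt
    · intro t ht
      have ht := interior_subset ht
      rw [(hd t ht).deriv]
      have hs := sinh_pos' (θ := t) ⟨by linarith [ht.1], by linarith [ht.2]⟩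
      have hc := cosh_pos' (θ := t) (by linarith [ht.1]) (by linarith [ht.2])
      have e : -2 * jrho A B t * z t ^ 2 * Real.sin (t / 2) ^ (2 * A) +
        (z t ^ 2 + lam * y t ^ 2) *
          (Real.sin (t / 2) ^ (2 * A) * (2 * A / 2 * (Real.cos (t / 2) / Real.sin (t / 2))))
          = Real.sin (t / 2) ^ (2 * A) * (B * (Real.sin (t/2) / Real.cos (t/2)) * z t ^ 2
            + A * (Real.cos (t/2) / Real.sin (t/2)) * (lam * y t ^ 2)) := by
        unfold jrho; ring
      rw [e]; positivity
  exact hm ⟨le_rfl, h12⟩ ⟨h12, le_rfl⟩ h12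

lemma JSol.antiC (h : JSol A B lam y z) (hA : 0 ≤ A) (hB : 0 ≤ B) (hl : 0 ≤ lam) {t2 : ℝ}
    (h12 : 0 ≤ t2) (h2 : t2 < π) :
    (z t2 ^ 2 + lam * y t2 ^ 2) * Real.cos (t2/2) ^ (2 * B) ≤ lam * y 0 ^ 2 := by
  have hm : AntitoneOn (fun t => (z t ^ 2 + lam * y t ^ 2) * Real.cos (t/2) ^ (2 * B)) (Icc 0 t2) := by
    have hd : ∀ t ∈ interior (Icc 0 t2), HasDerivAt
      (fun t => (z t ^ 2 + lam * y t ^ 2) * Real.cos (t/2) ^ (2 * B)) _ t := fun t ht => by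
      rw [interior_Icc] at ht
      exact (h.hF (θ := t) ⟨by linarith [ht.1], by linarith [ht.2]⟩).mul
        (hd_cosp (2*B) (by linarith [ht.1]) (by linarith [ht.2]))
    apply antitoneOn_of_deriv_nonpos (convex_Icc _ _)
    · intro t ht
      apply ContinuousAt.continuousWithinAt
      apply ContinuousAt.mul
      · have := h.zc; have := h.yc; fun_prop
      · exact (hd_cosp (2*B) ht.1 (by linarith [ht.2])).continuousAt
    · exact fun t ht => (hd t ht).differentiableAt.differentiableWithinAt
    · intro t ht
      rw [(hd t ht).deriv]
      rw [interior_Icc] at ht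
      have hs := sinh_pos' (θ := t) ⟨by linarith [ht.1], by linarith [ht.2]⟩
      have hc := cosh_pos' (θ := t) (by linarith [ht.1]) (by linarith [ht.2])
      have e : -2 * jrho A B t * z t ^ 2 * Real.cos (t / 2) ^ (2 * B) +
        (z t ^ 2 + lam * y t ^ 2) *
          (Real.cos (t / 2) ^ (2 * B) * (-(2 * B) / 2 * (Real.sin (t / 2) / Real.cos (t / 2))))
          = - (Real.cos (t / 2) ^ (2 * B) * (B * (Real.sin (t/2) / Real.cos (t/2)) * (lam * y t ^ 2)
            + A * (Real.cos (t/2) / Real.sin (t/2)) * (z t ^ 2))) := by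
        unfold jrho; ring
      rw [e, neg_nonpos]; positivity
  have := hm ⟨le_rfl, h12⟩ ⟨h12, le_rfl⟩ h12
  simpa [h.z0] using this

lemma abs_mul_le_F {N lam y z : ℝ} (hN : 0 < N) (hl : N ^ 2 ≤ lam) :
    |y * z| ≤ (z ^ 2 + lam * y ^ 2) / (2 * N) := by
  rw [le_div_iff₀ (by positivity), abs_mul]
  have : N ^ 2 * y ^ 2 ≤ lam * y ^ 2 := by gcongr
  nlinarith [sq_nonneg (N * |y| - |z|), sq_abs y, sq_abs z]

lemma JSol.bulk (h : JSol A B lam y z) (hA : 0 ≤ A) (hB : 0 ≤ B) {N : ℝ} (hN : 0 < N)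
    (hl : N ^ 2 ≤ lam) {t1 t2 : ℝ} (h1 : 0 < t1) (h12 : t1 ≤ t2) (h2 : t2 < π)
    (hr : ∀ t ∈ Icc t1 t2, |jrho A B t| ≤ N / 4) :
    (z t1 ^ 2 + lam * y t1 ^ 2) * (Real.sin (t1/2) ^ A * Real.cos (t1/2) ^ B)
      ≤ 4 * ((z t2 ^ 2 + lam * y t2 ^ 2) * (Real.sin (t2/2) ^ A * Real.cos (t2/2) ^ B)) := by
  set H : ℝ → ℝ := fun t => Real.sin (t/2) ^ A * Real.cos (t/2) ^ B *
    (z t ^ 2 + lam * y t ^ 2 + jrho A B t * (y t * z t)) with hH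
  set w : ℝ → ℝ := fun t => Real.sin (t/2) ^ A * Real.cos (t/2) ^ B with hw
  set F : ℝ → ℝ := fun t => z t ^ 2 + lam * y t ^ 2 with hF
  have hwp : ∀ t ∈ Icc t1 t2, 0 < w t := fun t ht => by
    have hs := sinh_pos' (θ := t) ⟨by linarith [ht.1], by linarith [ht.2]⟩
    have hc := cosh_pos' (θ := t) (by linarith [ht.1]) (by linarith [ht.2])
    simp only [hw]; positivity
  have hFp : ∀ t, 0 ≤ F t := fun t => by
    have : 0 ≤ lam := le_trans (by positivity) hl
    simp only [hF]; positivity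
  have hyz : ∀ t, |y t * z t| ≤ F t / (2 * N) := fun t => abs_mul_le_F hN hl
  have hcmp : ∀ t ∈ Icc t1 t2, |jrho A B t * (y t * z t)| ≤ F t / 8 := fun t ht => by
    rw [abs_mul]
    calc _ ≤ N / 4 * (F t / (2 * N)) := mul_le_mul (hr t ht) (hyz t) (abs_nonneg _) (by positivity)
      _ = F t / 8 := by field_simp; ring
  have hlo : ∀ t ∈ Icc t1 t2, 7 / 8 * (F t * w t) ≤ H t := fun t ht => by
    have := (abs_le.mp (hcmp t ht)).1
    have e : H t = w t * (F t + jrho A B t * (y t * z t)) := rfl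
    rw [e]
    nlinarith [hwp t ht]
  have hup : ∀ t ∈ Icc t1 t2, H t ≤ 9 / 8 * (F t * w t) := fun t ht => by
    have := (abs_le.mp (hcmp t ht)).2
    have e : H t = w t * (F t + jrho A B t * (y t * z t)) := rfl
    rw [e]
    nlinarith [hwp t ht]
  have hd : ∀ t ∈ Icc t1 t2, ∃ r' : ℝ, r' ≤ 0 ∧ HasDerivAt (fun t => H t * Real.exp (- jrho A B t / N))
      (w t * r' * (y t * z t) * Real.exp (- jrho A B t / N)
        + H t * (Real.exp (- jrho A B t / N) * (-r'/N))) t := fun t ht => by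
    have htm : t ∈ Ioo (0:ℝ) π := ⟨by linarith [ht.1], by linarith [ht.2]⟩
    have hs := sinh_pos' htm
    have hc := cosh_pos' htm.1.le htm.2
    refine ⟨-(A / 4 * (1 / Real.sin (t/2) ^ 2) + B / 4 * (1 / Real.cos (t/2) ^ 2)), ?_, ?_⟩
    · rw [neg_nonpos]; positivity
    · set r' := -(A / 4 * (1 / Real.sin (t/2) ^ 2) + B / 4 * (1 / Real.cos (t/2) ^ 2)) with hr'
      have dr : HasDerivAt (jrho A B) r' t := hd_rho htm
      have dH : HasDerivAt H (w t * r' * (y t * z t)) t := by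
        have d1 := ((hd_sinp A htm).mul (hd_cosp B htm.1.le htm.2)).mul
          ((h.hF htm).add (dr.mul ((h.hy t).mul (h.hz t htm))))
        refine d1.congr_deriv ?_
        simp only [Pi.mul_apply, Pi.add_apply, hw]
        have ej : jrho A B t = A / 2 * (Real.cos (t/2) / Real.sin (t/2))
          - B / 2 * (Real.sin (t/2) / Real.cos (t/2)) := rfl
        have e1 : A / 2 * (Real.cos (t/2) / Real.sin (t/2)) = jrho A B t
          + B / 2 * (Real.sin (t/2) / Real.cos (t/2)) := by rw [ej]; ring
        rw [e1]
        ring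
      have de : HasDerivAt (fun t => Real.exp (- jrho A B t / N))
          (Real.exp (- jrho A B t / N) * (-r'/N)) t := (dr.neg.div_const N).exp
      exact dH.mul de
  have hm : MonotoneOn (fun t => H t * Real.exp (- jrho A B t / N)) (Icc t1 t2) := by
    apply monotoneOn_of_deriv_nonneg (convex_Icc _ _)
    · intro t ht
      obtain ⟨_, _, hx⟩ := hd t ht
      exact hx.continuousAt.continuousWithinAt
    · intro t ht
      obtain ⟨_, _, hx⟩ := hd t (interior_subset ht)
      exact hx.differentiableAt.differentiableWithinAt
    · intro t ht
      have ht := interior_subset ht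
      obtain ⟨r', hr', hx⟩ := hd t ht
      rw [hx.deriv]
      have hw0 := hwp t ht
      have k1 : w t * r' * (y t * z t) ≥ w t * r' * (F t / (2 * N)) := by
        have := (le_abs_self _).trans (hyz t)
        apply mul_le_mul_of_nonpos_left this
        exact mul_nonpos_of_nonneg_of_nonpos hw0.le hr'
      have k2 : H t * (-r' / N) ≥ 7 / 8 * (F t * w t) * (-r' / N) := by
        apply mul_le_mul_of_nonneg_right (hlo t ht)
        apply div_nonneg (by linarith) hN.le
      have k3 : 0 ≤ (F t * w t) * (-r' / N) :=
        mul_nonneg (mul_nonneg (hFp t) hw0.le) (div_nonneg (by linarith) hN.le)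
      have k4 : w t * r' * (F t / (2 * N)) = - (1 / 2) * ((F t * w t) * (-r' / N)) := by
        field_simp
      have : 0 ≤ w t * r' * (y t * z t) + H t * (-r' / N) := by linarith
      have e5 : w t * r' * (y t * z t) * Real.exp (- jrho A B t / N)
        + H t * (Real.exp (- jrho A B t / N) * (-r'/N))
        = (w t * r' * (y t * z t) + H t * (-r' / N)) * Real.exp (- jrho A B t / N) := by ring
      rw [e5]; positivity
  have m1 : t1 ∈ Icc t1 t2 := ⟨le_rfl, h12⟩
  have m2 : t2 ∈ Icc t1 t2 := ⟨h12, le_rfl⟩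
  have key := hm m1 m2 h12
  simp only at key
  have hexp : Real.exp (- jrho A B t2 / N) ≤ 2.72 * Real.exp (- jrho A B t1 / N) := by
    have q1 := abs_le.mp (hr t1 m1)
    have q2 := abs_le.mp (hr t2 m2)
    have : - jrho A B t2 / N ≤ 1 + (- jrho A B t1 / N) := by
      rw [div_le_iff₀ hN, add_mul, div_mul_cancel₀ _ hN.ne']
      linarith [q1.2, q2.1]
    calc _ ≤ Real.exp (1 + (- jrho A B t1 / N)) := Real.exp_le_exp.mpr this
      _ = Real.exp 1 * Real.exp (- jrho A B t1 / N) := Real.exp_add _ _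
      _ ≤ _ := by
        have := Real.exp_one_lt_d9
        gcongr
        linarith
  have hH2 : 0 ≤ H t2 := le_trans (by have := hwp t2 m2; have := hFp t2; positivity) (hlo t2 m2)
  have hpos := Real.exp_pos (- jrho A B t1 / N)
  have k5 : H t1 ≤ 2.72 * H t2 := by
    have := key.trans (mul_le_mul_of_nonneg_left hexp hH2)
    have e : H t2 * (2.72 * Real.exp (- jrho A B t1 / N))
      = (2.72 * H t2) * Real.exp (- jrho A B t1 / N) := by ring
    rw [e] at this
    exact le_of_mul_le_mul_right this hpos
  have k6 := hlo t1 m1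
  have k7 := hup t2 m2
  have k8 : 0 ≤ F t2 * w t2 := mul_nonneg (hFp _) (hwp t2 m2).le
  change F t1 * w t1 ≤ 4 * (F t2 * w t2)
  linarith

end JacOde

section JacT

set_option maxHeartbeats 1000000 in
/-- Half-interval bound. -/
lemma jac_half (A B Lam C0 : ℝ) (hA : 0 ≤ A) (hB : 0 ≤ B) (hL : 1 ≤ Lam) (hC0 : 0 < C0) :
    ∃ C : ℝ, 0 < C ∧ ∀ N : ℝ, 4 * A + 4 * B + 2 ≤ N → ∀ lam : ℝ, N ^ 2 ≤ lam → lam ≤ Lam * N ^ 2 →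
      ∀ y z : ℝ → ℝ, JSol A B lam y z →
      (∀ t : ℝ, (∀ θ ∈ Icc (π/2) (2*π/3), t ≤ z θ ^ 2 + lam * y θ ^ 2) → t ≤ C0 * N ^ 2) →
      ∀ θ ∈ Icc (0:ℝ) (π/2),
        (z θ ^ 2 + lam * y θ ^ 2) * (Real.sin (θ/2) + 1 / N) ^ A ≤ C * N ^ 2 := by
  have hpi := Real.pi_pos
  have hpi3 := Real.pi_gt_three
  set κ : ℝ := 2 * π * A + π with hκ
  have hκpos : π ≤ κ := by have : 0 ≤ 2 * π * A := by positivity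
                           linarith
  set δ : ℝ := 1 / (2 * 2 ^ B * Real.sqrt Lam) with hδ
  have h2B : (1:ℝ) ≤ 2 ^ B := Real.one_le_rpow (by norm_num) hB
  have hsL : 1 ≤ Real.sqrt Lam := Real.one_le_sqrt.mpr hL
  have hδ0 : 0 < δ := by positivity
  have hδ1 : δ ≤ 1 := by
    rw [hδ, div_le_one (by positivity)]; nlinarith
  set C2 : ℝ := 4 * 2 ^ B * C0 with hC2
  have hC2p : 0 < C2 := by positivity
  set R : ℝ := (κ + 1) * π / δ with hR
  have hRp : 0 < R := by positivity
  have hR0 : 0 < κ + 1 := by linarith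
  set C3 : ℝ := R ^ (2 * A) * C2 + 2 ^ A * C2 with hC3
  have hC3p : 0 < C3 := by positivity
  refine ⟨4 * 2 ^ (2 * B) * C3 + C3, by positivity, ?_⟩
  intro N hN lam hl1 hl2 y z h hE
  have hN0 : 0 < N := by linarith
  have hlam : 0 ≤ lam := le_trans (by positivity) hl1
  set F : ℝ → ℝ := fun t => z t ^ 2 + lam * y t ^ 2 with hF
  have hFp : ∀ t, 0 ≤ F t := fun t => by simp only [hF]; positivity
  -- sin lower bound
  have hsl : ∀ t, 0 ≤ t → t ≤ π → t / π ≤ Real.sin (t/2) := fun t h0 h1 => by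
    have := Real.mul_le_sin (x := t/2) (by linarith) (by linarith)
    calc t / π = 2 / π * (t/2) := by ring
      _ ≤ _ := this
  have hκN : κ / N ≤ π / 2 := by
    rw [div_le_iff₀ hN0]; nlinarith
  have hcl : ∀ t, 0 ≤ t → t ≤ 2 * π / 3 → 1 / 2 ≤ Real.cos (t/2) := fun t h0 h1 => by
    rw [← Real.cos_pi_div_three]
    exact Real.cos_le_cos_of_nonneg_of_le_pi (by linarith) (by linarith) (by linarith)
  -- bulk
  have hrho : ∀ t, κ / N ≤ t → t ≤ 2 * π / 3 → |jrho A B t| ≤ N / 4 := by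
    intro t h1 h2
    have ht0 : 0 < t := lt_of_lt_of_le (by positivity) h1
    have hs := sinh_pos' (θ := t) ⟨ht0, by linarith⟩
    have hc := hcl t ht0.le h2
    have hs1 : κ / (π * N) ≤ Real.sin (t/2) := by
      refine le_trans ?_ (hsl t ht0.le (by linarith))
      rw [mul_comm, ← div_div]; gcongr
    have q1 : Real.cos (t/2) / Real.sin (t/2) ≤ π * N / κ := by
      rw [div_le_div_iff₀ hs (by linarith)]
      rw [div_le_iff₀ (by positivity)] at hs1
      have := Real.cos_le_one (t/2)
      nlinarith
    have q2 : Real.sin (t/2) / Real.cos (t/2) ≤ 2 := by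
      rw [div_le_iff₀ (by linarith)]
      linarith [Real.sin_le_one (t/2)]
    have q1' : 0 ≤ Real.cos (t/2) / Real.sin (t/2) := by positivity
    have q2' : 0 ≤ Real.sin (t/2) / Real.cos (t/2) := by positivity
    have q3 : A / 2 * (π * N / κ) ≤ N / 4 := by
      rw [← mul_div_assoc, div_le_iff₀ (by linarith), hκ]
      nlinarith [mul_pos hpi hN0]
    unfold jrho
    have q4 : A / 2 * (Real.cos (t/2) / Real.sin (t/2)) ≤ A / 2 * (π * N / κ) := by gcongr
    have q5 : B / 2 * (Real.sin (t/2) / Real.cos (t/2)) ≤ B / 2 * 2 := by gcongr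
    have q6 : 0 ≤ A / 2 * (Real.cos (t/2) / Real.sin (t/2)) := by positivity
    have q7 : 0 ≤ B / 2 * (Real.sin (t/2) / Real.cos (t/2)) := by positivity
    rw [abs_le]; constructor <;> linarith
  have stepH : ∀ θ, κ / N ≤ θ → θ ≤ π / 2 → F θ * Real.sin (θ/2) ^ A ≤ C2 * N ^ 2 := by
    intro θ h1 h2
    have ht0 : 0 < θ := lt_of_lt_of_le (by positivity) h1
    have hs := sinh_pos' (θ := θ) ⟨ht0, by linarith⟩
    have hc := hcl θ ht0.le (by linarith)
    have k := hE (F θ * (Real.sin (θ/2) ^ A * Real.cos (θ/2) ^ B) / 4) (by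
      intro θ' hθ'
      have hb := h.bulk hA hB hN0 hl1 ht0 (h2.trans hθ'.1) (by linarith [hθ'.2])
        (fun t ht => hrho t (h1.trans ht.1) (ht.2.trans hθ'.2))
      have hs' := sinh_pos' (θ := θ') ⟨by linarith [hθ'.1], by linarith [hθ'.2]⟩
      have hc' := hcl θ' (by linarith [hθ'.1]) hθ'.2
      have u1 : Real.sin (θ'/2) ^ A ≤ 1 := Real.rpow_le_one hs'.le (Real.sin_le_one _) hA
      have u2 : Real.cos (θ'/2) ^ B ≤ 1 := Real.rpow_le_one (by linarith) (Real.cos_le_one _) hB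
      have u3 : Real.sin (θ'/2) ^ A * Real.cos (θ'/2) ^ B ≤ 1 :=
        mul_le_one₀ u1 (Real.rpow_nonneg (by linarith) _) u2
      have u4 : F θ' * (Real.sin (θ'/2) ^ A * Real.cos (θ'/2) ^ B) ≤ F θ' :=
        mul_le_of_le_one_right (hFp _) u3
      change F θ * _ ≤ 4 * (F θ' * _) at hb
      change _ ≤ F θ'
      linarith)
    have u5 : ((1:ℝ)/2) ^ B ≤ Real.cos (θ/2) ^ B := Real.rpow_le_rpow (by norm_num) hc hB
    have u6 : ((1:ℝ)/2) ^ B * 2 ^ B = 1 := by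
      rw [← Real.mul_rpow (by norm_num) (by norm_num)]; norm_num
    have u7 : 0 ≤ F θ * Real.sin (θ/2) ^ A := mul_nonneg (hFp _) (by positivity)
    have u8 : F θ * Real.sin (θ/2) ^ A * (1/2) ^ B ≤ F θ * Real.sin (θ/2) ^ A * Real.cos (θ/2) ^ B := by
      gcongr
    calc F θ * Real.sin (θ/2) ^ A = (F θ * Real.sin (θ/2) ^ A * (1/2) ^ B) * 2 ^ B := by
          rw [mul_assoc, u6, mul_one]
      _ ≤ (4 * (C0 * N ^ 2)) * 2 ^ B :=
          mul_le_mul_of_nonneg_right (by linarith) (by positivity)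
      _ = C2 * N ^ 2 := by rw [hC2]; ring
  have step1 : ∀ θ, κ / N ≤ θ → θ ≤ π / 2 → F θ * (Real.sin (θ/2) + 1 / N) ^ A ≤ C3 * N ^ 2 := by
    intro θ h1 h2
    have ht0 : 0 < θ := lt_of_lt_of_le (by positivity) h1
    have hs := sinh_pos' (θ := θ) ⟨ht0, by linarith⟩
    have hs1 : 1 / N ≤ Real.sin (θ/2) := by
      refine le_trans ?_ (hsl θ ht0.le (by linarith))
      rw [le_div_iff₀ hpi]
      refine le_trans ?_ h1
      rw [div_mul_eq_mul_div, one_mul]; gcongr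
    calc F θ * (Real.sin (θ/2) + 1 / N) ^ A ≤ F θ * (2 * Real.sin (θ/2)) ^ A := by
          have := hFp θ
          gcongr; linarith
      _ = 2 ^ A * (F θ * Real.sin (θ/2) ^ A) := by
          rw [Real.mul_rpow (by norm_num) hs.le]; ring
      _ ≤ 2 ^ A * (C2 * N ^ 2) := mul_le_mul_of_nonneg_left (stepH θ h1 h2) (by positivity)
      _ ≤ C3 * N ^ 2 := by
          have : 0 ≤ R ^ (2 * A) * C2 * N ^ 2 := by positivity
          rw [hC3]; linarith
  have step2 : ∀ θ, δ / N ≤ θ → θ ≤ κ / N → F θ * (Real.sin (θ/2) + 1 / N) ^ A ≤ C3 * N ^ 2 := by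
    intro θ h1 h2
    have ht0 : 0 < θ := lt_of_lt_of_le (by positivity) h1
    have hs := sinh_pos' (θ := θ) ⟨ht0, by linarith⟩
    have hm := h.monoS hA hB hlam ht0 h2 (by linarith)
    change F θ * _ ≤ F (κ / N) * _ at hm
    have hH := stepH (κ/N) le_rfl hκN
    have hsκ := sinh_pos' (θ := κ/N) ⟨by positivity, by linarith⟩
    have hs1 : δ / (π * N) ≤ Real.sin (θ/2) := by
      refine le_trans ?_ (hsl θ ht0.le (by linarith))
      rw [mul_comm, ← div_div]; gcongr
    have hRs : (κ + 1) / N ≤ R * Real.sin (θ/2) := by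
      calc (κ + 1) / N = R * (δ / (π * N)) := by rw [hR]; field_simp
        _ ≤ _ := by gcongr
    have b1 : Real.sin (θ/2) + 1/N ≤ R * Real.sin (θ/2) := by
      refine le_trans ?_ hRs
      rw [add_div κ 1 N]
      have := Real.sin_le (x := θ/2) (by linarith)
      linarith
    have b2 : Real.sin (κ/N/2) ≤ R * Real.sin (θ/2) := by
      refine le_trans ?_ hRs
      rw [add_div κ 1 N]
      have := Real.sin_le (x := κ/N/2) (by positivity)
      have : 0 < κ / N := by positivity
      have : 0 < 1 / N := by positivity
      linarith
    have hsA : 0 < Real.sin (θ/2) ^ A := by positivity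
    refine le_trans (b := R ^ (2*A) * C2 * N ^ 2) (le_of_mul_le_mul_right ?_ hsA) ?_
    · calc F θ * (Real.sin (θ/2) + 1 / N) ^ A * Real.sin (θ/2) ^ A
          ≤ F θ * (R * Real.sin (θ/2)) ^ A * Real.sin (θ/2) ^ A := by
            have := hFp θ
            gcongr
        _ = R ^ A * (F θ * Real.sin (θ/2) ^ (2 * A)) := by
            rw [Real.mul_rpow hRp.le hs.le, two_mul A, Real.rpow_add hs]; ring
        _ ≤ R ^ A * (F (κ/N) * Real.sin (κ/N/2) ^ (2 * A)) := by gcongr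
        _ = R ^ A * ((F (κ/N) * Real.sin (κ/N/2) ^ A) * Real.sin (κ/N/2) ^ A) := by
            rw [two_mul A, Real.rpow_add hsκ]; ring
        _ ≤ R ^ A * ((C2 * N ^ 2) * (R * Real.sin (θ/2)) ^ A) := by gcongr
        _ = R ^ (2 * A) * C2 * N ^ 2 * Real.sin (θ/2) ^ A := by
            rw [Real.mul_rpow hRp.le hs.le, two_mul A, Real.rpow_add hRp]; ring
    · have : 0 ≤ 2 ^ A * C2 * N ^ 2 := by positivity
      rw [hC3]; linarith
  have hδκ : δ / N ≤ κ / N := by gcongr; linarith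
  have hδN : 0 < δ / N := by positivity
  have hant : ∀ θ, 0 ≤ θ → θ ≤ π / 2 → F θ ≤ 2 ^ (2 * B) * (lam * y 0 ^ 2) := by
    intro θ h0 h1
    have k := h.antiC hA hB hlam h0 (by linarith)
    change F θ * _ ≤ _ at k
    have u5 : ((1:ℝ)/2) ^ (2 * B) ≤ Real.cos (θ/2) ^ (2 * B) :=
      Real.rpow_le_rpow (by norm_num) (hcl θ h0 (by linarith)) (by linarith)
    have u6 : ((1:ℝ)/2) ^ (2 * B) * 2 ^ (2 * B) = 1 := by
      rw [← Real.mul_rpow (by norm_num) (by norm_num)]; norm_num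
    calc F θ = (F θ * (1/2) ^ (2 * B)) * 2 ^ (2 * B) := by rw [mul_assoc, u6, mul_one]
      _ ≤ (F θ * Real.cos (θ/2) ^ (2 * B)) * 2 ^ (2 * B) := by
          have := hFp θ
          gcongr
      _ ≤ (lam * y 0 ^ 2) * 2 ^ (2 * B) := by gcongr
      _ = _ := by ring
  have hF0 : lam * y 0 ^ 2 ≤ 4 * F (δ / N) := by
    have hz : ∀ t ∈ Icc (0:ℝ) (δ/N), |z t| ≤ 2 ^ B * (Real.sqrt Lam * N) * |y 0| := by
      intro t ht
      have k := hant t ht.1 (by linarith [ht.2])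
      refine abs_le_of_sq_le_sq ?_ (by positivity)
      have e : (2 ^ B * (Real.sqrt Lam * N) * |y 0|) ^ 2 = 2 ^ (2 * B) * (Lam * N ^ 2 * y 0 ^ 2) := by
        rw [mul_comm 2 B, Real.rpow_mul (by norm_num)]
        rw [mul_pow, mul_pow, mul_pow, Real.sq_sqrt (by linarith), sq_abs]
        norm_cast; ring
      rw [e]
      calc z t ^ 2 ≤ F t := by
            have : 0 ≤ lam * y t ^ 2 := by positivity
            simp only [hF]; linarith
        _ ≤ _ := k
        _ ≤ _ := by gcongr
    have mv := (convex_Icc (0:ℝ) (δ/N)).norm_image_sub_le_of_norm_hasDerivWithin_le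
      (fun t _ => (h.hy t).hasDerivWithinAt) hz (left_mem_Icc.mpr hδN.le) (right_mem_Icc.mpr hδN.le)
    have e : 2 ^ B * (Real.sqrt Lam * N) * |y 0| * ‖δ/N - 0‖ = |y 0| / 2 := by
      rw [sub_zero, Real.norm_of_nonneg hδN.le, hδ]; field_simp
    rw [e, Real.norm_eq_abs] at mv
    have q : |y 0| ≤ 2 * |y (δ/N)| := by
      have := abs_sub_abs_le_abs_sub (y 0) (y (δ/N))
      rw [abs_sub_comm] at this
      linarith
    have q2 : y 0 ^ 2 ≤ 4 * y (δ/N) ^ 2 := by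
      rw [← sq_abs (y 0), ← sq_abs (y (δ/N))]
      nlinarith [abs_nonneg (y 0)]
    have q3 : lam * y 0 ^ 2 ≤ lam * (4 * y (δ/N) ^ 2) := by gcongr
    have q4 : F (δ/N) = z (δ/N) ^ 2 + lam * y (δ/N) ^ 2 := rfl
    rw [q4]; linarith [sq_nonneg (z (δ/N))]
  have step0 : ∀ θ, 0 ≤ θ → θ ≤ δ / N →
      F θ * (Real.sin (θ/2) + 1 / N) ^ A ≤ 4 * 2 ^ (2 * B) * C3 * N ^ 2 := by
    intro θ h0 h1
    have k := hant θ h0 (by linarith)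
    have hs0 : 0 ≤ Real.sin (θ/2) := Real.sin_nonneg_of_nonneg_of_le_pi (by linarith) (by linarith)
    have hsm : Real.sin (θ/2) ≤ Real.sin (δ/N/2) :=
      Real.sin_le_sin_of_le_of_le_pi_div_two (by linarith) (by linarith) (by linarith)
    calc F θ * (Real.sin (θ/2) + 1 / N) ^ A
        ≤ (2 ^ (2 * B) * (4 * F (δ/N))) * (Real.sin (δ/N/2) + 1 / N) ^ A := by
          have := hFp (δ/N)
          have k' : F θ ≤ 2 ^ (2 * B) * (4 * F (δ/N)) := k.trans (by gcongr)
          gcongr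
      _ = 4 * 2 ^ (2 * B) * (F (δ/N) * (Real.sin (δ/N/2) + 1 / N) ^ A) := by ring
      _ ≤ 4 * 2 ^ (2 * B) * (C3 * N ^ 2) :=
          mul_le_mul_of_nonneg_left (step2 _ le_rfl hδκ) (by positivity)
      _ = _ := by ring
  intro θ hθ
  have p1 : 0 ≤ C3 * N ^ 2 := by positivity
  have p2 : 0 ≤ 4 * 2 ^ (2 * B) * C3 * N ^ 2 := by positivity
  change F θ * _ ≤ _
  rw [add_mul]
  rcases le_total θ (δ/N) with h1 | h1
  · linarith [step0 θ hθ.1 h1]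
  rcases le_total θ (κ/N) with h2 | h2
  · linarith [step2 θ h1 h2]
  · linarith [step1 θ h2 hθ.2]

end JacT

section JacPt
open Polynomial

lemma JSol.reflect {A B lam : ℝ} {y z : ℝ → ℝ} (h : JSol A B lam y z) (hpi : z π = 0) :
    JSol B A lam (fun t => y (π - t)) (fun t => - z (π - t)) where
  hy t := by
    have := (h.hy (π - t)).comp t ((hasDerivAt_id t).const_sub π)
    refine this.congr_deriv (by simp)
  hz t ht := by
    have := ((h.hz (π - t) ⟨by linarith [ht.2], by linarith [ht.1]⟩).comp t
      ((hasDerivAt_id t).const_sub π)).neg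
    refine this.congr_deriv ?_
    have e : jrho A B (π - t) = - jrho B A t := by
      unfold jrho
      rw [show (π - t)/2 = π/2 - t/2 by ring, Real.cos_pi_div_two_sub, Real.sin_pi_div_two_sub]
      ring
    rw [e]; ring
  z0 := by simp [hpi]
  zc := by have := h.zc; fun_prop

/-- `p_n(cos θ)` -/
def yN (p : ℕ → ℝ[X]) (n : ℕ) (θ : ℝ) : ℝ := (p n).eval (Real.cos θ)
/-- derivative of `p_n(cos θ)` -/
def zN (p : ℕ → ℝ[X]) (n : ℕ) (θ : ℝ) : ℝ := - Real.sin θ * (derivative (p n)).eval (Real.cos θ)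

lemma jsol_of_data {a b : ℝ} {ell : ℝ[X] →ₗ[ℝ] ℝ} {p : ℕ → ℝ[X]} (h : JacData a b ell p) (n : ℕ) :
    JSol (2 * a + 1) (2 * b + 1) (n * (n + a + b + 1)) (yN p n) (zN p n) where
  hy t := by
    have := ((p n).hasDerivAt (Real.cos t)).comp t (Real.hasDerivAt_cos t)
    refine this.congr_deriv ?_
    unfold zN; ring
  hz t ht := by
    have hs := sinh_pos' ht
    have hc := cosh_pos' ht.1.le ht.2
    have d := (Real.hasDerivAt_sin t).neg.mul
      (((derivative (p n)).hasDerivAt (Real.cos t)).comp t (Real.hasDerivAt_cos t))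
    refine d.congr_deriv ?_
    have o := congrArg (eval (Real.cos t)) (h.ode n)
    unfold jacD at o
    simp only [eval_add, eval_mul, eval_sub, eval_one, eval_pow, eval_X, eval_C, eval_neg] at o
    unfold zN yN
    have e1 : Real.sin t = 2 * Real.sin (t/2) * Real.cos (t/2) := by
      rw [← Real.sin_two_mul]; ring_nf
    have e2 : Real.cos t = 2 * Real.cos (t/2) ^ 2 - 1 := by
      rw [← Real.cos_two_mul]; ring_nf
    have e3 : Real.cos t = 1 - 2 * Real.sin (t/2) ^ 2 := by
      rw [e2, Real.cos_sq']; ring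
    have e4 : jrho (2 * a + 1) (2 * b + 1) t * Real.sin t
        = (2 * a + 1) * Real.cos (t/2) ^ 2 - (2 * b + 1) * Real.sin (t/2) ^ 2 := by
      unfold jrho; rw [e1]; field_simp
    have e5 : Real.cos (t/2) ^ 2 = (1 + Real.cos t) / 2 := by rw [e2]; ring
    have e6 : Real.sin (t/2) ^ 2 = (1 - Real.cos t) / 2 := by rw [e3]; ring
    rw [e5, e6] at e4
    have e7 := Real.sin_sq_add_cos_sq t
    simp only [Function.comp_apply, Pi.neg_apply]
    linear_combination o - (derivative (p n)).eval (Real.cos t) * e4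
      + (derivative (derivative (p n))).eval (Real.cos t) * e7
  z0 := by simp [zN]
  zc := by unfold zN; fun_prop

lemma jac_F_large {c a b : ℝ} (hc : 0 < c) (ha : -(1/2) ≤ a) (hb : -(1/2) ≤ b)
    (hw : IntegrableOn (jacW c a b) (Icc (-1:ℝ) 1)) {p : ℕ → ℝ[X]}
    (hp : IsONPS (jacW c a b) p) :
    ∃ C : ℝ, 0 < C ∧ ∀ n : ℕ, 1 ≤ n → 4 * (2 * a + 1) + 4 * (2 * b + 1) + 2 ≤ (n:ℝ) →
      ∀ θ ∈ Icc (0:ℝ) π,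
      (zN p n θ ^ 2 + (n * (n + a + b + 1)) * yN p n θ ^ 2) *
        ((Real.sin (θ/2) + 1 / n) ^ (2 * a + 1) * (Real.cos (θ/2) + 1 / n) ^ (2 * b + 1))
        ≤ C * (n:ℝ) ^ 2 := by
  have hpi := Real.pi_pos
  have hA : 0 ≤ 2 * a + 1 := by linarith
  have hB : 0 ≤ 2 * b + 1 := by linarith
  have hdata := jac_data (by linarith) (by linarith) hw hp
  obtain ⟨K1, hK1, hav1⟩ := jac_avg hc (by linarith) (by linarith) hw hp (-(1/2)) 0
    (by norm_num) (by norm_num) (by norm_num)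
  obtain ⟨K2, hK2, hav2⟩ := jac_avg hc (by linarith) (by linarith) hw hp 0 (1/2)
    (by norm_num) (by norm_num) (by norm_num)
  set Lam : ℝ := a + b + 2 with hLam
  have hL : 1 ≤ Lam := by linarith
  obtain ⟨C1, hC1, h1⟩ := jac_half (2*a+1) (2*b+1) Lam (K1 * Lam) hA hB hL (by positivity)
  obtain ⟨C2, hC2, h2⟩ := jac_half (2*b+1) (2*a+1) Lam (K2 * Lam) hB hA hL (by positivity)
  refine ⟨C1 * 2 ^ (2*b+1) + C2 * 2 ^ (2*a+1), by positivity, ?_⟩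
  intro n hn hnl θ hθ
  have hn1 : (1:ℝ) ≤ n := by exact_mod_cast hn
  have hn0 : (0:ℝ) < n := by linarith
  set lam : ℝ := n * (n + a + b + 1) with hlam
  have hl1 : (n:ℝ) ^ 2 ≤ lam := by rw [hlam]; nlinarith
  have hl2 : lam ≤ Lam * (n:ℝ) ^ 2 := by rw [hlam, hLam]; nlinarith
  have hl0 : 0 ≤ lam := by nlinarith
  have hz2 : ∀ t, zN p n t ^ 2 = (1 - Real.cos t ^ 2) * ((derivative (p n)).eval (Real.cos t)) ^ 2 := by
    intro t; unfold zN; rw [← Real.sin_sq]; ring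
  have hsol := jsol_of_data hdata n
  have hinv : 1 / (n:ℝ) ≤ 1 := by rw [div_le_one hn0]; exact hn1
  have hinv0 : 0 < 1 / (n:ℝ) := by positivity
  have hs0 : 0 ≤ Real.sin (θ/2) :=
    Real.sin_nonneg_of_nonneg_of_le_pi (by linarith [hθ.1]) (by linarith [hθ.2])
  have hc0 : 0 ≤ Real.cos (θ/2) :=
    Real.cos_nonneg_of_mem_Icc ⟨by linarith [hθ.1], by linarith [hθ.2]⟩
  have hF0 : 0 ≤ zN p n θ ^ 2 + lam * yN p n θ ^ 2 := by positivity
  have hE1 : ∀ t : ℝ, (∀ θ ∈ Icc (π/2) (2*π/3), t ≤ zN p n θ ^ 2 + lam * yN p n θ ^ 2) →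
      t ≤ K1 * Lam * (n:ℝ) ^ 2 := by
    intro t ht
    have := hav1 n t hl0 (by
      intro x hx
      have k := ht (Real.arccos x) ⟨by
        rw [← Real.arccos_zero]; exact Real.arccos_le_arccos hx.2, by
        have e : Real.arccos (-(1/2)) = 2 * π / 3 := by
          rw [Real.arccos_neg, ← Real.cos_pi_div_three, Real.arccos_cos (by linarith) (by linarith)]
          ring
        rw [← e]; exact Real.arccos_le_arccos hx.1⟩
      rw [hz2] at k
      unfold yN at k
      rwa [Real.cos_arccos (by linarith [hx.1]) (by linarith [hx.2])] at k)
    calc t ≤ K1 * lam := this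
      _ ≤ K1 * (Lam * (n:ℝ)^2) := by gcongr
      _ = _ := by ring
  have hE2 : ∀ t : ℝ, (∀ θ ∈ Icc (π/2) (2*π/3), t ≤ (- zN p n (π - θ)) ^ 2 + lam * yN p n (π - θ) ^ 2) →
      t ≤ K2 * Lam * (n:ℝ) ^ 2 := by
    intro t ht
    have := hav2 n t hl0 (by
      intro x hx
      have k := ht (π - Real.arccos x) ⟨by
        have : Real.arccos x ≤ π/2 := by
          rw [← Real.arccos_zero]; exact Real.arccos_le_arccos hx.1
        linarith, by
        have : π / 3 ≤ Real.arccos x := by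
          rw [← Real.arccos_cos (x := π/3) (by linarith) (by linarith), Real.cos_pi_div_three]
          exact Real.arccos_le_arccos hx.2
        linarith⟩
      rw [neg_sq, hz2] at k
      unfold yN at k
      rwa [sub_sub_cancel, Real.cos_arccos (by linarith [hx.1]) (by linarith [hx.2])] at k)
    calc t ≤ K2 * lam := this
      _ ≤ K2 * (Lam * (n:ℝ)^2) := by gcongr
      _ = _ := by ring
  have q1 : 0 ≤ C1 * 2 ^ (2*b+1) * (n:ℝ)^2 := by positivity
  have q2 : 0 ≤ C2 * 2 ^ (2*a+1) * (n:ℝ)^2 := by positivity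
  rcases le_total θ (π/2) with hle | hle
  · have k := h1 n hnl lam hl1 hl2 _ _ hsol hE1 θ ⟨hθ.1, hle⟩
    have u : (Real.cos (θ/2) + 1 / n) ^ (2*b+1) ≤ 2 ^ (2*b+1) :=
      Real.rpow_le_rpow (by positivity) (by linarith [Real.cos_le_one (θ/2)]) hB
    calc _ = ((zN p n θ ^ 2 + lam * yN p n θ ^ 2) * (Real.sin (θ/2) + 1 / n) ^ (2 * a + 1))
          * (Real.cos (θ/2) + 1 / n) ^ (2*b+1) := by ring
      _ ≤ (C1 * (n:ℝ)^2) * 2 ^ (2*b+1) := mul_le_mul k u (by positivity) (by positivity)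
      _ ≤ _ := by rw [add_mul]; linarith
  · have k := h2 n (by linarith) lam hl1 hl2 _ _ (hsol.reflect (by simp [zN])) hE2 (π - θ)
      ⟨by linarith [hθ.2], by linarith⟩
    simp only [sub_sub_cancel, neg_sq] at k
    rw [show (π - θ)/2 = π/2 - θ/2 by ring, Real.sin_pi_div_two_sub] at k
    have u : (Real.sin (θ/2) + 1 / n) ^ (2*a+1) ≤ 2 ^ (2*a+1) :=
      Real.rpow_le_rpow (by positivity) (by linarith [Real.sin_le_one (θ/2)]) hA
    calc _ = ((zN p n θ ^ 2 + lam * yN p n θ ^ 2) * (Real.cos (θ/2) + 1 / n) ^ (2 * b + 1))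
          * (Real.sin (θ/2) + 1 / n) ^ (2*a+1) := by ring
      _ ≤ (C2 * (n:ℝ)^2) * 2 ^ (2*a+1) := mul_le_mul k u (by positivity) (by positivity)
      _ ≤ _ := by rw [add_mul]; linarith

lemma jac_F_all {c a b : ℝ} (hc : 0 < c) (ha : -(1/2) ≤ a) (hb : -(1/2) ≤ b)
    (hw : IntegrableOn (jacW c a b) (Icc (-1:ℝ) 1)) {p : ℕ → ℝ[X]}
    (hp : IsONPS (jacW c a b) p) :
    ∃ C : ℝ, 0 < C ∧ ∀ n : ℕ, 1 ≤ n → ∀ θ ∈ Icc (0:ℝ) π,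
      (zN p n θ ^ 2 + (n * (n + a + b + 1)) * yN p n θ ^ 2) *
        ((Real.sin (θ/2) + 1 / n) ^ (2 * a + 1) * (Real.cos (θ/2) + 1 / n) ^ (2 * b + 1))
        ≤ C * (n:ℝ) ^ 2 := by
  obtain ⟨C1, hC1, h1⟩ := jac_F_large hc ha hb hw hp
  have hsm : ∀ n : ℕ, ∃ C : ℝ, 0 ≤ C ∧ ∀ θ ∈ Icc (0:ℝ) π,
      (zN p n θ ^ 2 + (n * (n + a + b + 1)) * yN p n θ ^ 2) *
        ((Real.sin (θ/2) + 1 / n) ^ (2 * a + 1) * (Real.cos (θ/2) + 1 / n) ^ (2 * b + 1)) ≤ C := by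
    intro n
    have hcont : Continuous (fun θ => (zN p n θ ^ 2 + (n * (n + a + b + 1)) * yN p n θ ^ 2) *
        ((Real.sin (θ/2) + 1 / n) ^ (2 * a + 1) * (Real.cos (θ/2) + 1 / n) ^ (2 * b + 1))) := by
      have c1 : Continuous (zN p n) := by unfold zN; fun_prop
      have c2 : Continuous (yN p n) := by unfold yN; fun_prop
      have c3 : Continuous (fun θ : ℝ => (Real.sin (θ/2) + 1 / (n:ℝ)) ^ (2 * a + 1)) :=
        (by fun_prop : Continuous (fun θ : ℝ => Real.sin (θ/2) + 1 / (n:ℝ))).rpow_const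
          (fun _ => Or.inr (by linarith))
      have c4 : Continuous (fun θ : ℝ => (Real.cos (θ/2) + 1 / (n:ℝ)) ^ (2 * b + 1)) :=
        (by fun_prop : Continuous (fun θ : ℝ => Real.cos (θ/2) + 1 / (n:ℝ))).rpow_const
          (fun _ => Or.inr (by linarith))
      exact ((c1.pow 2).add (continuous_const.mul (c2.pow 2))).mul (c3.mul c4)
    obtain ⟨C, hC⟩ := (isCompact_Icc (a := (0:ℝ)) (b := π)).bddAbove_image hcont.continuousOn
    exact ⟨max C 0, le_max_right _ _, fun θ hθ => (hC ⟨θ, hθ, rfl⟩).trans (le_max_left _ _)⟩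
  choose S hS0 hS using hsm
  obtain ⟨n0, hn0⟩ := exists_nat_ge (4 * (2 * a + 1) + 4 * (2 * b + 1) + 2)
  have hsum : 0 ≤ ∑ k ∈ Finset.range n0, S k := Finset.sum_nonneg (fun k _ => hS0 k)
  refine ⟨C1 + ∑ k ∈ Finset.range n0, S k, by positivity, ?_⟩
  intro n hn θ hθ
  have hn1 : (1:ℝ) ≤ n := by exact_mod_cast hn
  rcases lt_or_ge n n0 with hlt | hge
  · have k1 := hS n θ hθ
    have k2 : S n ≤ ∑ k ∈ Finset.range n0, S k :=
      Finset.single_le_sum (fun k _ => hS0 k) (Finset.mem_range.mpr hlt)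
    have : (1:ℝ) ≤ (n:ℝ)^2 := by nlinarith
    refine k1.trans (k2.trans ?_)
    nlinarith
  · have := h1 n hn (hn0.trans (by exact_mod_cast hge)) θ hθ
    refine this.trans ?_
    gcongr; linarith

end JacPt

section JacKer
open Polynomial

/-- reciprocal of the pointwise majorant -/
def dN (a b : ℝ) (n : ℕ) (θ : ℝ) : ℝ :=
  (Real.sin (θ/2) + 1 / n) ^ (a + 1/2) * (Real.cos (θ/2) + 1 / n) ^ (b + 1/2)

lemma half_sin_nonneg {θ : ℝ} (hθ : θ ∈ Icc (0:ℝ) π) : 0 ≤ Real.sin (θ/2) :=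
  Real.sin_nonneg_of_nonneg_of_le_pi (by linarith [hθ.1]) (by linarith [hθ.2, Real.pi_pos])

lemma half_cos_nonneg {θ : ℝ} (hθ : θ ∈ Icc (0:ℝ) π) : 0 ≤ Real.cos (θ/2) :=
  Real.cos_nonneg_of_mem_Icc ⟨by linarith [hθ.1, Real.pi_pos], by linarith [hθ.2]⟩

lemma half_sin_ge {θ : ℝ} (hθ : θ ∈ Icc (0:ℝ) π) : θ ≤ π * Real.sin (θ/2) := by
  have := Real.mul_le_sin (x := θ/2) (by linarith [hθ.1]) (by linarith [hθ.2])
  rw [div_mul_eq_mul_div, div_le_iff₀ Real.pi_pos] at this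
  linarith

lemma dN_pos {a b : ℝ} {n : ℕ} (hn : 1 ≤ n) {θ : ℝ} (hθ : θ ∈ Icc (0:ℝ) π) : 0 < dN a b n θ := by
  have h1 := half_sin_nonneg hθ
  have h2 := half_cos_nonneg hθ
  have : (0:ℝ) < n := by exact_mod_cast hn
  unfold dN; positivity

lemma dN_anti {a b : ℝ} (ha : -(1/2) ≤ a) (hb : -(1/2) ≤ b) {k n : ℕ} (hk : 1 ≤ k) (hkn : k ≤ n)
    {θ : ℝ} (hθ : θ ∈ Icc (0:ℝ) π) : dN a b n θ ≤ dN a b k θ := by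
  have h1 := half_sin_nonneg hθ
  have h2 := half_cos_nonneg hθ
  have h3 : (0:ℝ) < k := by exact_mod_cast hk
  have h4 : (k:ℝ) ≤ n := by exact_mod_cast hkn
  have h5 : 1 / (n:ℝ) ≤ 1 / k := one_div_le_one_div_of_le h3 h4
  have h6 : 0 < 1 / (n:ℝ) := by have : (0:ℝ) < n := by linarith
                                positivity
  unfold dN
  apply mul_le_mul
  · exact Real.rpow_le_rpow (by linarith) (by linarith) (by linarith)
  · exact Real.rpow_le_rpow (by linarith) (by linarith) (by linarith)
  · exact Real.rpow_nonneg (by linarith) _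
  · exact Real.rpow_nonneg (by linarith) _

lemma dN_le {a b : ℝ} (ha : -(1/2) ≤ a) (hb : -(1/2) ≤ b) {n : ℕ} (hn : 1 ≤ n)
    {θ : ℝ} (hθ : θ ∈ Icc (0:ℝ) π) : dN a b n θ ≤ 2 ^ (a + 1/2) * 2 ^ (b + 1/2) := by
  refine (dN_anti ha hb le_rfl hn hθ).trans ?_
  have h1 := half_sin_nonneg hθ
  have h2 := half_cos_nonneg hθ
  have h3 := Real.sin_le_one (θ/2)
  have h4 := Real.cos_le_one (θ/2)
  unfold dN
  rw [Nat.cast_one, div_one]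
  apply mul_le_mul
  · exact Real.rpow_le_rpow (by linarith) (by linarith) (by linarith)
  · exact Real.rpow_le_rpow (by linarith) (by linarith) (by linarith)
  · exact Real.rpow_nonneg (by linarith) _
  · exact Real.rpow_nonneg (by linarith) _

lemma jac_pt {c a b : ℝ} (hc : 0 < c) (ha : -(1/2) ≤ a) (hb : -(1/2) ≤ b)
    (hw : IntegrableOn (jacW c a b) (Icc (-1:ℝ) 1)) {p : ℕ → ℝ[X]}
    (hp : IsONPS (jacW c a b) p) :
    ∃ K : ℝ, 0 < K ∧ ∀ n : ℕ, 1 ≤ n → ∀ θ ∈ Icc (0:ℝ) π,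
      |yN p n θ| * dN a b n θ ≤ K ∧ |zN p n θ| * dN a b n θ ≤ K * n := by
  obtain ⟨C, hC, h⟩ := jac_F_all hc ha hb hw hp
  refine ⟨Real.sqrt C, Real.sqrt_pos.mpr hC, ?_⟩
  intro n hn θ hθ
  have k := h n hn θ hθ
  have hn1 : (1:ℝ) ≤ n := by exact_mod_cast hn
  have h1 : 0 < Real.sin (θ/2) + 1 / n := by have := half_sin_nonneg hθ; positivity
  have h2 : 0 < Real.cos (θ/2) + 1 / n := by have := half_cos_nonneg hθ; positivity
  have hd := dN_pos (a := a) (b := b) hn hθ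
  have e : (Real.sin (θ/2) + 1 / n) ^ (2 * a + 1) * (Real.cos (θ/2) + 1 / n) ^ (2 * b + 1)
      = dN a b n θ ^ 2 := by
    unfold dN
    rw [mul_pow, ← Real.rpow_mul_natCast h1.le, ← Real.rpow_mul_natCast h2.le]
    congr 2 <;> push_cast <;> ring
  rw [e] at k
  have hl : (n:ℝ)^2 ≤ n * (n + a + b + 1) := by nlinarith
  have p1 : (n:ℝ)^2 * yN p n θ ^ 2 ≤ n * (n + a + b + 1) * yN p n θ ^ 2 := by gcongr
  constructor
  · refine (abs_le_of_sq_le_sq' ?_ (Real.sqrt_nonneg _)).2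
    rw [Real.sq_sqrt hC.le, mul_pow, sq_abs]
    have : (yN p n θ ^ 2 * dN a b n θ ^ 2) * (n:ℝ)^2 ≤ C * (n:ℝ)^2 := by
      refine le_trans ?_ k
      have : (n:ℝ)^2 * yN p n θ ^ 2 ≤ zN p n θ ^ 2 + n * (n + a + b + 1) * yN p n θ ^ 2 := by
        linarith [sq_nonneg (zN p n θ)]
      calc _ = ((n:ℝ)^2 * yN p n θ ^ 2) * dN a b n θ ^ 2 := by ring
        _ ≤ _ := by gcongr
    exact le_of_mul_le_mul_right this (by positivity)
  · refine (abs_le_of_sq_le_sq' ?_ (by positivity)).2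
    rw [mul_pow, mul_pow, Real.sq_sqrt hC.le, sq_abs]
    refine le_trans ?_ k
    have : 0 ≤ (n:ℝ)^2 * yN p n θ ^ 2 := by positivity
    gcongr
    linarith

lemma jac_ker {c a b : ℝ} (hc : 0 < c) (ha : -(1/2) ≤ a) (hb : -(1/2) ≤ b)
    (hw : IntegrableOn (jacW c a b) (Icc (-1:ℝ) 1)) {p : ℕ → ℝ[X]}
    (hp : IsONPS (jacW c a b) p) :
    ∃ K : ℝ, 0 < K ∧ ∀ n : ℕ, 1 ≤ n → ∀ θ ∈ Icc (0:ℝ) π, ∀ φ ∈ Icc (0:ℝ) π,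
      |CDK p n (Real.cos θ) (Real.cos φ)| * (dN a b n θ * dN a b n φ) * (|θ - φ| + 1 / n) ≤ K := by
  obtain ⟨K, hK, h⟩ := jac_pt hc ha hb hw hp
  have hdata := jac_data (by linarith) (by linarith) hw hp
  set D0 : ℝ := 2 ^ (a + 1/2) * 2 ^ (b + 1/2) with hD0
  have hD0p : 0 < D0 := by positivity
  set q0 : ℝ := (p 0).coeff 0 with hq0
  have hpi := Real.pi_pos
  refine ⟨2 * (q0 ^ 2 * D0 ^ 2 + K ^ 2) + 4 * π * K ^ 2, by positivity, ?_⟩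
  intro n hn θ hθ φ hφ
  have hn1 : (1:ℝ) ≤ n := by exact_mod_cast hn
  have hn0 : (0:ℝ) < n := by linarith
  have hdθ := dN_pos (a := a) (b := b) hn hθ
  have hdφ := dN_pos (a := a) (b := b) hn hφ
  set E := dN a b n θ * dN a b n φ with hE
  have hEp : 0 < E := by positivity
  have hin : 0 < 1 / (n:ℝ) := by positivity
  -- each term
  have hterm : ∀ k, 1 ≤ k → k ≤ n → |yN p k θ * yN p k φ| * E ≤ K ^ 2 := by
    intro k hk hkn
    have u1 : |yN p k θ| * dN a b n θ ≤ K :=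
      (mul_le_mul_of_nonneg_left (dN_anti ha hb hk hkn hθ) (abs_nonneg _)).trans (h k hk θ hθ).1
    have u2 : |yN p k φ| * dN a b n φ ≤ K :=
      (mul_le_mul_of_nonneg_left (dN_anti ha hb hk hkn hφ) (abs_nonneg _)).trans (h k hk φ hφ).1
    calc _ = (|yN p k θ| * dN a b n θ) * (|yN p k φ| * dN a b n φ) := by rw [abs_mul, hE]; ring
      _ ≤ K * K := mul_le_mul u1 u2 (by positivity) hK.le
      _ = K ^ 2 := by ring
  rcases le_total (|θ - φ|) (1 / n) with hnear | hfar
  · have hsum : |CDK p n (Real.cos θ) (Real.cos φ)| * E ≤ (q0 ^ 2 * D0 ^ 2 + K ^ 2) * n := by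
      have e0 : ∀ x, (p 0).eval x = q0 := by
        intro x
        rw [Polynomial.eq_C_of_natDegree_eq_zero (hdata.deg 0)]; simp [hq0]
      have s0 : |q0 * q0| * E ≤ q0 ^ 2 * D0 ^ 2 := by
        rw [← sq, abs_of_nonneg (sq_nonneg q0)]
        have v1 := dN_le ha hb hn hθ
        have v2 := dN_le ha hb hn hφ
        have : E ≤ D0 ^ 2 := by
          rw [hE, sq]; exact mul_le_mul v1 v2 hdφ.le hD0p.le
        gcongr
      have s1 : |∑ k ∈ Finset.range n, (p (k+1)).eval (Real.cos θ) * (p (k+1)).eval (Real.cos φ)| * E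
          ≤ n * K ^ 2 := by
        calc _ ≤ (∑ k ∈ Finset.range n, |yN p (k+1) θ * yN p (k+1) φ|) * E := by
              gcongr; exact Finset.abs_sum_le_sum_abs _ _
          _ = ∑ k ∈ Finset.range n, |yN p (k+1) θ * yN p (k+1) φ| * E := Finset.sum_mul _ _ _
          _ ≤ ∑ k ∈ Finset.range n, K ^ 2 := by
              apply Finset.sum_le_sum
              intro k hk
              exact hterm (k+1) (by omega) (by have := Finset.mem_range.mp hk; omega)
          _ = n * K ^ 2 := by simp
      unfold CDK
      rw [Finset.sum_range_succ', e0, e0]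
      have s2 := abs_add_le (∑ k ∈ Finset.range n, (p (k+1)).eval (Real.cos θ) * (p (k+1)).eval (Real.cos φ)) (q0 * q0)
      have s3 := mul_le_mul_of_nonneg_right s2 hEp.le
      have s4 : q0 ^ 2 * D0 ^ 2 ≤ q0 ^ 2 * D0 ^ 2 * n := le_mul_of_one_le_right (by positivity) hn1
      rw [add_mul] at s3
      linarith
    have hd2 : |θ - φ| + 1 / n ≤ 2 / n := by
      rw [show (2:ℝ)/n = 1/n + 1/n by ring]; linarith
    calc _ ≤ ((q0 ^ 2 * D0 ^ 2 + K ^ 2) * n) * (2 / n) :=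
          mul_le_mul hsum hd2 (by positivity) (by positivity)
      _ = 2 * (q0 ^ 2 * D0 ^ 2 + K ^ 2) := by field_simp
      _ ≤ _ := by have : 0 ≤ 4 * π * K ^ 2 := by positivity
                  linarith
  · have hd0 : 0 < |θ - φ| := lt_of_lt_of_le hin hfar
    have hne : θ ≠ φ := by intro he; simp [he] at hd0
    set S := Real.sin ((θ + φ)/2) with hS
    set σ := |Real.sin ((θ - φ)/2)| with hσ
    have hSp : 0 < S := by
      apply Real.sin_pos_of_pos_of_lt_pi
      · rcases lt_or_gt_of_ne hne with h1 | h1 <;> linarith [hθ.1, hφ.1]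
      · rcases lt_or_gt_of_ne hne with h1 | h1 <;> linarith [hθ.2, hφ.2]
    have hxy : |Real.cos θ - Real.cos φ| = 2 * S * σ := by
      rw [Real.cos_sub_cos, abs_mul, abs_mul, abs_of_pos hSp]; norm_num; exact Or.inl rfl
    have hss : Real.sin θ + Real.sin φ ≤ 2 * S := by
      rw [Real.sin_add_sin]
      have := Real.cos_le_one ((θ - φ)/2)
      nlinarith
    have hσ1 : σ ≤ 1 := Real.abs_sin_le_one _
    have hσl : |θ - φ| ≤ π * σ := by
      have hh : |θ - φ| ∈ Icc (0:ℝ) π :=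
        ⟨abs_nonneg _, abs_le.mpr ⟨by linarith [hθ.1, hφ.2], by linarith [hθ.2, hφ.1]⟩⟩
      have k := half_sin_ge hh
      have : Real.sin (|θ - φ|/2) ≤ σ := by
        rcases abs_cases (θ - φ) with ⟨e, _⟩ | ⟨e, _⟩
        · rw [e]; exact le_abs_self _
        · rw [e, neg_div, Real.sin_neg]; exact neg_le_abs _
      exact k.trans (by gcongr)
    obtain ⟨m, rfl⟩ : ∃ m, n = m + 1 := ⟨n - 1, by omega⟩
    have hker := hdata.kernel (Real.cos θ) (Real.cos φ) m
    set km := ∑ k ∈ Finset.range (m + 1), (p k).eval (Real.cos θ) * (p k).eval (Real.cos φ) with hkm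
    have hrhs : (1 - Real.cos φ ^ 2) * (derivative (p (m+1))).eval (Real.cos φ) * (p (m+1)).eval (Real.cos θ)
      - (1 - Real.cos θ ^ 2) * (derivative (p (m+1))).eval (Real.cos θ) * (p (m+1)).eval (Real.cos φ)
      + (m + 1) * (Real.cos φ - Real.cos θ) * ((p (m+1)).eval (Real.cos θ) * (p (m+1)).eval (Real.cos φ))
      = (Real.sin θ * zN p (m+1) θ * yN p (m+1) φ - Real.sin φ * zN p (m+1) φ * yN p (m+1) θ)
      + (m + 1) * (Real.cos φ - Real.cos θ) * (yN p (m+1) θ * yN p (m+1) φ) := by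
      rw [← Real.sin_sq, ← Real.sin_sq]; unfold zN yN; ring
    rw [hrhs] at hker
    have hsθ : 0 ≤ Real.sin θ := Real.sin_nonneg_of_nonneg_of_le_pi hθ.1 hθ.2
    have hsφ : 0 ≤ Real.sin φ := Real.sin_nonneg_of_nonneg_of_le_pi hφ.1 hφ.2
    obtain ⟨hy1, hz1⟩ := h (m+1) hn θ hθ
    obtain ⟨hy2, hz2⟩ := h (m+1) hn φ hφ
    set N : ℝ := ((m+1 : ℕ) : ℝ) with hN
    have hNm : (m:ℝ) + 1 = N := by rw [hN]; push_cast; ring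
    have w1 : |zN p (m+1) θ * yN p (m+1) φ| * E ≤ K ^ 2 * N := by
      calc _ = (|zN p (m+1) θ| * dN a b (m+1) θ) * (|yN p (m+1) φ| * dN a b (m+1) φ) := by
            rw [abs_mul, hE]; ring
        _ ≤ (K * N) * K := mul_le_mul hz1 hy2 (by positivity) (by positivity)
        _ = _ := by ring
    have w2 : |zN p (m+1) φ * yN p (m+1) θ| * E ≤ K ^ 2 * N := by
      calc _ = (|zN p (m+1) φ| * dN a b (m+1) φ) * (|yN p (m+1) θ| * dN a b (m+1) θ) := by
            rw [abs_mul, hE]; ring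
        _ ≤ (K * N) * K := mul_le_mul hz2 hy1 (by positivity) (by positivity)
        _ = _ := by ring
    have w3 := hterm (m+1) hn le_rfl
    have habs : (2 * N) * (|Real.cos θ - Real.cos φ| * |km|) * E
        ≤ K ^ 2 * N * (Real.sin θ + Real.sin φ) + N * |Real.cos θ - Real.cos φ| * K ^ 2 := by
      have g1 : (2 * N) * (|Real.cos θ - Real.cos φ| * |km|)
          ≤ |(2 * m + a + b + 3) * ((Real.cos θ - Real.cos φ) * km)| := by
        rw [abs_mul, abs_mul]
        apply mul_le_mul_of_nonneg_right _ (by positivity)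
        refine le_trans ?_ (le_abs_self _)
        linarith
      have g2 : |(2 * m + a + b + 3) * ((Real.cos θ - Real.cos φ) * km)|
          ≤ Real.sin θ * |zN p (m+1) θ * yN p (m+1) φ| + Real.sin φ * |zN p (m+1) φ * yN p (m+1) θ|
            + N * |Real.cos θ - Real.cos φ| * |yN p (m+1) θ * yN p (m+1) φ| := by
        rw [hker]
        refine (abs_add_le _ _).trans ?_
        apply add_le_add
        · refine (abs_sub _ _).trans ?_
          rw [mul_assoc, mul_assoc, abs_mul (Real.sin θ), abs_mul (Real.sin φ), abs_of_nonneg hsθ,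
            abs_of_nonneg hsφ]
        · rw [abs_mul, abs_mul, hNm, abs_of_pos hn0, abs_sub_comm]
      calc _ ≤ (Real.sin θ * |zN p (m+1) θ * yN p (m+1) φ| + Real.sin φ * |zN p (m+1) φ * yN p (m+1) θ|
            + N * |Real.cos θ - Real.cos φ| * |yN p (m+1) θ * yN p (m+1) φ|) * E :=
            mul_le_mul_of_nonneg_right (g1.trans g2) hEp.le
        _ = Real.sin θ * (|zN p (m+1) θ * yN p (m+1) φ| * E)
            + Real.sin φ * (|zN p (m+1) φ * yN p (m+1) θ| * E)
            + N * |Real.cos θ - Real.cos φ| * (|yN p (m+1) θ * yN p (m+1) φ| * E) := by ring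
        _ ≤ Real.sin θ * (K ^ 2 * N) + Real.sin φ * (K ^ 2 * N)
            + N * |Real.cos θ - Real.cos φ| * K ^ 2 := by gcongr
        _ = _ := by ring
    rw [hxy] at habs
    have hσ0 : 0 ≤ σ := abs_nonneg _
    have hmain : σ * (|km| * E) ≤ K ^ 2 := by
      have g : (σ * (|km| * E)) * (4 * N * S) ≤ K ^ 2 * (4 * N * S) := by
        have g1 : K ^ 2 * N * (Real.sin θ + Real.sin φ) ≤ K ^ 2 * N * (2 * S) := by gcongr
        have g2 : N * (2 * S * σ) * K ^ 2 ≤ N * (2 * S * 1) * K ^ 2 := by gcongr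
        linarith
      exact le_of_mul_le_mul_right g (by positivity)
    have hCD : |CDK p (m+1) (Real.cos θ) (Real.cos φ)| ≤ |km| + |yN p (m+1) θ * yN p (m+1) φ| := by
      unfold CDK
      rw [Finset.sum_range_succ]
      exact abs_add_le _ _
    have g3 : σ * (|CDK p (m+1) (Real.cos θ) (Real.cos φ)| * E) ≤ 2 * K ^ 2 := by
      calc _ ≤ σ * ((|km| + |yN p (m+1) θ * yN p (m+1) φ|) * E) := by gcongr
        _ = σ * (|km| * E) + σ * (|yN p (m+1) θ * yN p (m+1) φ| * E) := by ring
        _ ≤ K ^ 2 + 1 * K ^ 2 := by gcongr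
        _ = _ := by ring
    calc _ ≤ |CDK p (m+1) (Real.cos θ) (Real.cos φ)| * E * (2 * (π * σ)) := by
          gcongr; linarith
      _ = 2 * π * (σ * (|CDK p (m+1) (Real.cos θ) (Real.cos φ)| * E)) := by ring
      _ ≤ 2 * π * (2 * K ^ 2) := by gcongr
      _ ≤ _ := by
          have : 0 ≤ 2 * (q0 ^ 2 * D0 ^ 2 + K ^ 2) := by positivity
          linarith

lemma jac_X {n : ℕ} (hn : 1 ≤ n) {s t d : ℝ} (hs : 0 ≤ s) (ht : 0 ≤ t)
    (hd : d ≤ π * (s + t)) :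
    s * t + d / n + 1 / (n:ℝ) ^ 2 ≤ π * ((s + 1 / n) * (t + 1 / n)) := by
  have hn0 : (0:ℝ) < n := by exact_mod_cast hn
  have e : π * ((s + 1 / n) * (t + 1 / n)) = π * (s * t) + (π * (s + t)) / n + π * (1 / (n:ℝ)^2) := by
    field_simp; ring
  rw [e]
  have h1 : d / n ≤ (π * (s + t)) / n := by gcongr
  have h2 : 0 ≤ s * t := by positivity
  have h3 : 0 ≤ 1 / (n:ℝ) ^ 2 := by positivity
  have := Real.pi_gt_three
  nlinarith

end JacKer

/-- sharp pointwise upper bound for the kernels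
`k_n^{(α,β),i,j}(cos θ, cos φ)`. -/
theorem stmt_13
    (α β : ℝ) (hα : -(1/2 : ℝ) ≤ α) (hβ : -(1/2 : ℝ) ≤ β)
    (i j : ℝ) (hi : 0 ≤ i) (hj : 0 ≤ j)
    (c' : ℝ) (hc'p : 0 < c')
    (hc' : (∫ x in Icc (-1:ℝ) 1, c' * (1 - x) ^ (α + i) * (1 + x) ^ (β + j)) = 1)
    (p : ℕ → Polynomial ℝ)
    (hp : IsONPS (fun x => c' * (1 - x) ^ (α + i) * (1 + x) ^ (β + j)) p) :
    ∃ c : ℝ, 0 < c ∧ ∀ n : ℕ, 1 ≤ n → ∀ θ φ : ℝ, θ ∈ Icc (0:ℝ) π → φ ∈ Icc (0:ℝ) π →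
      |(Real.sin (θ/2) * Real.sin (φ/2)) ^ i * (Real.cos (θ/2) * Real.cos (φ/2)) ^ j
          * CDK p n (Real.cos θ) (Real.cos φ)|
        ≤ c * (Real.sin (θ/2) * Real.sin (φ/2) + |θ - φ| / n + 1 / (n:ℝ)^2) ^ (-α - 1/2)
            * (Real.cos (θ/2) * Real.cos (φ/2) + |θ - φ| / n + 1 / (n:ℝ)^2) ^ (-β - 1/2)
            / (|θ - φ| + 1 / n) := by
  have ha : -(1/2) ≤ α + i := by linarith
  have hb : -(1/2) ≤ β + j := by linarith
  have hw : IntegrableOn (jacW c' (α + i) (β + j)) (Icc (-1:ℝ) 1) := by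
    by_contra hcon
    have := integral_undef hcon
    unfold jacW at this
    rw [hc'] at this
    norm_num at this
  obtain ⟨K, hK, hker⟩ := jac_ker hc'p ha hb hw hp
  have hpi := Real.pi_pos
  refine ⟨π ^ (α + i + 1/2) * π ^ (β + j + 1/2) * K, by positivity, ?_⟩
  intro n hn θ φ hθ hφ
  have hk := hker n hn θ hθ φ hφ
  have hn0 : (0:ℝ) < n := by exact_mod_cast hn
  have hs1 := half_sin_nonneg hθ
  have hs2 := half_sin_nonneg hφ
  have hc1 := half_cos_nonneg hθ
  have hc2 := half_cos_nonneg hφ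
  set X := Real.sin (θ/2) * Real.sin (φ/2) + |θ - φ| / n + 1 / (n:ℝ)^2 with hX
  set Y := Real.cos (θ/2) * Real.cos (φ/2) + |θ - φ| / n + 1 / (n:ℝ)^2 with hY
  have hXp : 0 < X := by positivity
  have hYp : 0 < Y := by positivity
  have hX1 : X ≤ π * ((Real.sin (θ/2) + 1 / n) * (Real.sin (φ/2) + 1 / n)) := by
    apply jac_X hn hs1 hs2
    have := half_sin_ge hθ
    have := half_sin_ge hφ
    rw [abs_le]; constructor <;> linarith [hθ.1, hφ.1]
  have hY1 : Y ≤ π * ((Real.cos (θ/2) + 1 / n) * (Real.cos (φ/2) + 1 / n)) := by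
    apply jac_X hn hc1 hc2
    have k1 := half_sin_ge (θ := π - θ) ⟨by linarith [hθ.2], by linarith [hθ.1]⟩
    have k2 := half_sin_ge (θ := π - φ) ⟨by linarith [hφ.2], by linarith [hφ.1]⟩
    rw [show (π - θ)/2 = π/2 - θ/2 by ring, Real.sin_pi_div_two_sub] at k1
    rw [show (π - φ)/2 = π/2 - φ/2 by ring, Real.sin_pi_div_two_sub] at k2
    rw [abs_le]; constructor <;> linarith [hθ.2, hφ.2]
  set k := |CDK p n (Real.cos θ) (Real.cos φ)| with hkdef
  have hk0 : 0 ≤ k := abs_nonneg _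
  have hd0 : 0 < |θ - φ| + 1 / n := by positivity
  have hXY : X ^ (α + i + 1/2) * Y ^ (β + j + 1/2)
      ≤ π ^ (α + i + 1/2) * π ^ (β + j + 1/2)
        * (dN (α + i) (β + j) n θ * dN (α + i) (β + j) n φ) := by
    have u1 := Real.rpow_le_rpow hXp.le hX1 (by linarith : 0 ≤ α + i + 1/2)
    have u2 := Real.rpow_le_rpow hYp.le hY1 (by linarith : 0 ≤ β + j + 1/2)
    rw [Real.mul_rpow hpi.le (by positivity), Real.mul_rpow (by positivity) (by positivity)] at u1 u2
    refine (mul_le_mul u1 u2 (by positivity) (by positivity)).trans (le_of_eq ?_)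
    unfold dN; ring
  have hmain : X ^ (α + i + 1/2) * Y ^ (β + j + 1/2) * k * (|θ - φ| + 1 / n)
      ≤ π ^ (α + i + 1/2) * π ^ (β + j + 1/2) * K := by
    calc _ ≤ π ^ (α + i + 1/2) * π ^ (β + j + 1/2)
        * (dN (α + i) (β + j) n θ * dN (α + i) (β + j) n φ) * k * (|θ - φ| + 1 / n) := by gcongr
      _ = π ^ (α + i + 1/2) * π ^ (β + j + 1/2) *
        (k * (dN (α + i) (β + j) n θ * dN (α + i) (β + j) n φ) * (|θ - φ| + 1 / n)) := by ring
      _ ≤ _ := by gcongr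
  have hXi : (Real.sin (θ/2) * Real.sin (φ/2)) ^ i ≤ X ^ (α + i + 1/2) * X ^ (-α - 1/2) := by
    rw [← Real.rpow_add hXp, show α + i + 1/2 + (-α - 1/2) = i by ring]
    apply Real.rpow_le_rpow (by positivity) _ hi
    have : 0 ≤ |θ - φ| / n + 1 / (n:ℝ)^2 := by positivity
    rw [hX]; linarith
  have hYj : (Real.cos (θ/2) * Real.cos (φ/2)) ^ j ≤ Y ^ (β + j + 1/2) * Y ^ (-β - 1/2) := by
    rw [← Real.rpow_add hYp, show β + j + 1/2 + (-β - 1/2) = j by ring]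
    apply Real.rpow_le_rpow (by positivity) _ hj
    have : 0 ≤ |θ - φ| / n + 1 / (n:ℝ)^2 := by positivity
    rw [hY]; linarith
  rw [le_div_iff₀ hd0, abs_mul, abs_of_nonneg (by positivity)]
  calc _ ≤ (X ^ (α + i + 1/2) * X ^ (-α - 1/2)) * (Y ^ (β + j + 1/2) * Y ^ (-β - 1/2)) * k
        * (|θ - φ| + 1 / n) := by gcongr
    _ = (X ^ (α + i + 1/2) * Y ^ (β + j + 1/2) * k * (|θ - φ| + 1 / n))
        * X ^ (-α - 1/2) * Y ^ (-β - 1/2) := by ring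
    _ ≤ _ := by gcongr
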